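/- Let l ≥ 1 and let (a_1,b_1),…,(a_l,b_l) be pairwise distinct pairs of nonnegative integers with a_k·p + b_k·q < (p−1)(q−1) for all k. Then there exists α ∈ K^I such that C_α is a nodal curve with exactly l nodes, and these nodes can be enumerated as (ξ_1,η_1),…,(ξ_l,η_l) in such a way that the determinant of the l×l matrix whose (i,k)-entry is ξ_i^{a_k} η_i^{b_k} is nonzero. -/

import Mathlib

open MvPolynomial

/-- The index set `I` of pairs `(ν,μ)` of nonnegative integers with `νp + μq < pq`
(for `p, q ≥ 1` the conditions `ν < q`, `μ < p` are automatic). -/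
def idxSet (p q : ℕ) : Finset (ℕ × ℕ) :=
  (Finset.range q ×ˢ Finset.range p).filter fun t => t.1 * p + t.2 * q < p * q

/-- The normed Weierstraß polynomial `F_α = Y^p − X^q + Σ a_{νμ} X^ν Y^μ`,
as a polynomial in two variables `X 0 = X`, `X 1 = Y`. -/
noncomputable def wPoly (K : Type) [CommRing K] (p q : ℕ) (a : idxSet p q → K) :
    MvPolynomial (Fin 2) K :=
  X 1 ^ p - X 0 ^ q + ∑ i : idxSet p q, C (a i) * X 0 ^ (i : ℕ × ℕ).1 * X 1 ^ (i : ℕ × ℕ).2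

/-- The Hessian determinant `G_{XX} G_{YY} − G_{XY}²` of a polynomial in `X, Y`. -/
noncomputable def hessPoly (K : Type) [CommRing K] (G : MvPolynomial (Fin 2) K) :
    MvPolynomial (Fin 2) K :=
  pderiv 0 (pderiv 0 G) * pderiv 1 (pderiv 1 G) - (pderiv 0 (pderiv 1 G)) ^ 2

/-- `P` is a singular point of the curve `G = 0`. -/
def IsSingAt (K : Type) [CommRing K] (G : MvPolynomial (Fin 2) K) (P : K × K) : Prop :=
  eval ![P.1, P.2] G = 0 ∧ eval ![P.1, P.2] (pderiv 0 G) = 0 ∧ eval ![P.1, P.2] (pderiv 1 G) = 0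

/-- `P` is a node of the curve `G = 0`. -/
def IsNodeAt (K : Type) [CommRing K] (G : MvPolynomial (Fin 2) K) (P : K × K) : Prop :=
  IsSingAt K G P ∧ eval ![P.1, P.2] (hessPoly K G) ≠ 0

/-!
Let `D_n` be the Dickson polynomial with `D_n (u + u⁻¹) = u ^ n + u⁻¹ ^ n`. The curve
`D_p(Y) = D_q(X)` is of type `p, q`, and `D_p(Y) - D_q(X)` has `(p - 1)(q - 1)` critical points, all
nondegenerate. Half of them lie on the curve; these are its nodes. Along `τ ↦ (D_p(τ), D_q(τ))`,
which parametrises the curve and passes through each node twice, a combination of gap monomials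
becomes a polynomial of degree less than `(p - 1)(q - 1)`, because distinct gap monomials acquire
distinct degrees. If it vanished at all nodes it would have `(p - 1)(q - 1)` zeros; hence the gap
monomials form a basis of the functions on the set of nodes, and some `l` nodes give a nonzero minor
in the prescribed columns.

Perturbing the curve by gap monomials moves the critical values at the nodes independently. Hensel's
lemma over `K⟦X⟧`, followed by specialisation of the power series to elements of `K` through the
Nullstellensatz, keeps the chosen nodes on the curve, moves the other ones off it, and preserves
all nonvanishing conditions. No further singular points appear, since a normed Weierstraß polynomial
of type `p, q` has at most `(p - 1)(q - 1)` critical points: modulo its partial derivatives every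
polynomial is a combination of the `X ^ a * Y ^ b` with `a < q - 1` and `b < p - 1`.
-/

section Hensel

variable {A R σ τ : Type*} [CommRing A] [CommRing R] [Algebra A R] {I : Ideal R}

theorem aeval_sub_aeval_mem {y z : σ → R} (h : ∀ j, y j - z j ∈ I) (f : MvPolynomial σ A) :
    aeval y f - aeval z f ∈ I := by
  have hyz : (fun j => Ideal.Quotient.mkₐ A I (y j)) = fun j => Ideal.Quotient.mkₐ A I (z j) :=
    funext fun j => Ideal.Quotient.eq.mpr (h j)
  rw [← Ideal.Quotient.eq, ← Ideal.Quotient.mkₐ_eq_mk A, comp_aeval_apply, comp_aeval_apply, hyz]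

/-- The Jacobian matrix of a family of polynomials at a point with coordinates in an algebra. -/
noncomputable def jacobianMatrix (Φ : τ → MvPolynomial σ A) (z : σ → R) : Matrix τ σ R :=
  Matrix.of fun i j => aeval z (pderiv j (Φ i))

/-- One step of the simplified Newton iteration for `Φ z = y`, in which a fixed matrix `B` stands
in for the inverse of the Jacobian matrix. -/
noncomputable def newtonStep [Fintype τ] (Φ : τ → MvPolynomial σ A) (B : Matrix σ τ R) (y : τ → R)
    (z : σ → R) : σ → R :=
  z - B.mulVec fun i => aeval z (Φ i) - y i

theorem newtonStep_sub_mem [Fintype τ] (Φ : τ → MvPolynomial σ A) (B : Matrix σ τ R) {y : τ → R}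
    {z : σ → R} (hz : ∀ i, aeval z (Φ i) - y i ∈ I) (j : σ) : newtonStep Φ B y z j - z j ∈ I := by
  rw [newtonStep, Pi.sub_apply, sub_sub_cancel_left, neg_mem_iff]
  exact sum_mem fun i _ => Ideal.mul_mem_left _ _ (hz i)

variable [Fintype σ]

/-- The derivative of a polynomial at the point `z` in the direction `h`. -/
noncomputable def directionalDerivative (z h : σ → R) : MvPolynomial σ A →ₗ[A] R :=
  ∑ j, LinearMap.mulRight A (h j) ∘ₗ (aeval z).toLinearMap ∘ₗ (pderiv j).toLinearMap

theorem directionalDerivative_apply (z h : σ → R) (f : MvPolynomial σ A) :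
    directionalDerivative z h f = ∑ j, aeval z (pderiv j f) * h j := by
  simp [directionalDerivative, LinearMap.sum_apply]

theorem jacobianMatrix_mulVec_apply (Φ : τ → MvPolynomial σ A) (z h : σ → R) (i : τ) :
    (jacobianMatrix Φ z).mulVec h i = directionalDerivative z h (Φ i) :=
  (directionalDerivative_apply z h (Φ i)).symm

theorem directionalDerivative_C (z h : σ → R) (a : A) :
    directionalDerivative z h (C a) = 0 := by
  simp [directionalDerivative_apply]

theorem directionalDerivative_X (z h : σ → R) (j : σ) :
    directionalDerivative z h (X j : MvPolynomial σ A) = h j := by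
  classical
  simp [directionalDerivative_apply, pderiv_X, Pi.single_apply, apply_ite]

theorem directionalDerivative_mul (z h : σ → R) (f g : MvPolynomial σ A) :
    directionalDerivative z h (f * g) =
      directionalDerivative z h f * aeval z g + aeval z f * directionalDerivative z h g := by
  simp only [directionalDerivative_apply, Finset.sum_mul, Finset.mul_sum]
  rw [← Finset.sum_add_distrib]
  refine Finset.sum_congr rfl fun k _ => ?_
  simp only [pderiv_mul, map_add, map_mul]
  ring

theorem directionalDerivative_rename {ρ : Type*} [Fintype ρ] (e : σ → ρ) (z h : ρ → R)
    (f : MvPolynomial σ A) :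
    directionalDerivative z h (rename e f) = directionalDerivative (z ∘ e) (h ∘ e) f := by
  induction f using MvPolynomial.induction_on with
  | C a => rw [rename_C, directionalDerivative_C, directionalDerivative_C]
  | add f g hf hg => simp only [map_add, hf, hg]
  | mul_X f j hf =>
    simp only [map_mul, rename_X, directionalDerivative_mul, directionalDerivative_X, hf, aeval_X,
      aeval_rename, Function.comp_apply]

theorem aeval_add_sub_aeval_sub_directionalDerivative_mem_sq {h : σ → R} (hh : ∀ j, h j ∈ I)
    (z : σ → R) (f : MvPolynomial σ A) :
    aeval (z + h) f - aeval z f - directionalDerivative z h f ∈ I ^ 2 := by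
  induction f using MvPolynomial.induction_on with
  | C a => simp [directionalDerivative_C]
  | add f g hf hg =>
    convert add_mem hf hg using 1
    simp only [map_add]
    ring
  | mul_X f j hf =>
    have hfh : (aeval (z + h) f - aeval z f) * h j ∈ I ^ 2 := by
      rw [sq]
      exact Ideal.mul_mem_mul (aeval_sub_aeval_mem (by simpa using hh) f) (hh j)
    convert add_mem (Ideal.mul_mem_right (z j) _ hf) hfh using 1
    simp only [directionalDerivative_mul, directionalDerivative_X, map_mul, aeval_X, Pi.add_apply]
    ring

theorem aeval_add_sub_aeval_sub_jacobianMatrix_mulVec_mem (Φ : τ → MvPolynomial σ A)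
    {z₀ z h : σ → R} {n : ℕ} (hz : ∀ j, z j - z₀ j ∈ I) (hh : ∀ j, h j ∈ I ^ (n + 1)) (i : τ) :
    aeval (z + h) (Φ i) - aeval z (Φ i) - (jacobianMatrix Φ z₀).mulVec h i ∈ I ^ (n + 2) := by
  have hquad : aeval (z + h) (Φ i) - aeval z (Φ i) - directionalDerivative z h (Φ i)
      ∈ I ^ (n + 2) := by
    have hsq := aeval_add_sub_aeval_sub_directionalDerivative_mem_sq hh z (Φ i)
    rw [← pow_mul] at hsq
    exact Ideal.pow_le_pow_right (by omega) hsq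
  have hlin : ∑ j, (aeval z (pderiv j (Φ i)) - aeval z₀ (pderiv j (Φ i))) * h j
      ∈ I ^ (n + 2) := by
    refine sum_mem fun j _ => ?_
    rw [pow_succ']
    exact Ideal.mul_mem_mul (aeval_sub_aeval_mem hz _) (hh j)
  convert add_mem hquad hlin using 1
  simp only [jacobianMatrix_mulVec_apply, directionalDerivative_apply, sub_mul,
    Finset.sum_sub_distrib]
  ring

variable [DecidableEq τ] {Φ : τ → MvPolynomial σ A} {z₀ : σ → R} {B : Matrix σ τ R}
  {y : τ → R}

theorem aeval_newtonStep_sub_mem [Fintype τ] (hB : jacobianMatrix Φ z₀ * B = 1)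
    {z : σ → R} {n : ℕ} (hz : ∀ j, z j - z₀ j ∈ I)
    (hzy : ∀ i, aeval z (Φ i) - y i ∈ I ^ (n + 1)) (i : τ) :
    aeval (newtonStep Φ B y z) (Φ i) - y i ∈ I ^ (n + 2) := by
  have htaylor := aeval_add_sub_aeval_sub_jacobianMatrix_mulVec_mem Φ hz
    (fun j => newtonStep_sub_mem Φ B hzy j) i
  have hstep : (fun j => newtonStep Φ B y z j - z j) =
      -B.mulVec fun i => aeval z (Φ i) - y i := by
    ext j
    simp [newtonStep]
  rw [hstep, Matrix.mulVec_neg, Matrix.mulVec_mulVec, hB, Matrix.one_mulVec, ← sub_eq_add_neg]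
    at htaylor
  simpa [newtonStep] using htaylor

theorem newtonStep_iterate_sub_mem [Fintype τ] (hB : jacobianMatrix Φ z₀ * B = 1)
    (hy : ∀ i, aeval z₀ (Φ i) - y i ∈ I) (n : ℕ) :
    (∀ j, (newtonStep Φ B y)^[n] z₀ j - z₀ j ∈ I) ∧
      ∀ i, aeval ((newtonStep Φ B y)^[n] z₀) (Φ i) - y i ∈ I ^ (n + 1) := by
  induction n with
  | zero => simpa using hy
  | succ n ih =>
    simp only [Function.iterate_succ_apply']
    refine ⟨fun j => ?_, aeval_newtonStep_sub_mem hB ih.1 ih.2⟩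
    have hstep := newtonStep_sub_mem Φ B (fun i => Ideal.pow_le_self n.succ_ne_zero (ih.2 i)) j
    simpa using add_mem hstep (ih.1 j)

theorem exists_aeval_eq_of_jacobianMatrix_mul_eq_one [Finite τ] [IsAdicComplete I R]
    (hB : jacobianMatrix Φ z₀ * B = 1) (hy : ∀ i, aeval z₀ (Φ i) - y i ∈ I) :
    ∃ z : σ → R, (∀ j, z j - z₀ j ∈ I) ∧ ∀ i, aeval z (Φ i) = y i := by
  cases nonempty_fintype τ
  set zs : ℕ → σ → R := fun n => (newtonStep Φ B y)^[n] z₀ with hzs_def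
  have hzs (n : ℕ) : (∀ j, zs n j - z₀ j ∈ I) ∧ ∀ i, aeval (zs n) (Φ i) - y i ∈ I ^ (n + 1) :=
    newtonStep_iterate_sub_mem hB hy n
  have hcauchy (j : σ) {m n : ℕ} (hmn : m ≤ n) : zs m j ≡ zs n j [SMOD (I ^ m • ⊤ : Ideal R)] := by
    induction n, hmn using Nat.le_induction with
    | base => rfl
    | succ n hmn ih =>
      refine ih.trans (SModEq.sub_mem.mpr ?_)
      rw [smul_eq_mul, Ideal.mul_top, sub_mem_comm_iff]
      simpa only [hzs_def, Function.iterate_succ_apply'] using newtonStep_sub_mem Φ B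
        (fun i => Ideal.pow_le_pow_right (hmn.trans n.le_succ) ((hzs n).2 i)) j
  choose z hz using fun j => IsPrecomplete.prec' (I := I) (fun n => zs n j) (hcauchy j)
  have hlim (n : ℕ) (j : σ) : z j - zs n j ∈ I ^ n := by
    simpa [sub_mem_comm_iff] using SModEq.sub_mem.mp (hz j n)
  refine ⟨z, fun j => ?_, fun i => sub_eq_zero.mp (IsHausdorff.haus' (I := I) _ fun n => ?_)⟩
  · have hz₁ : z j - zs 1 j ∈ I := by simpa using hlim 1 j
    exact sub_add_sub_cancel (z j) (zs 1 j) (z₀ j) ▸ add_mem hz₁ ((hzs 1).1 j)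
  · rw [SModEq.zero, smul_eq_mul, Ideal.mul_top,
      ← sub_add_sub_cancel (aeval z (Φ i)) (aeval (zs n) (Φ i)) (y i)]
    exact add_mem (aeval_sub_aeval_mem (hlim n) (Φ i))
      (Ideal.pow_le_pow_right n.le_succ ((hzs n).2 i))

end Hensel

section PartialSmoothing

variable {K σ τ : Type*}

theorem jacobianMatrix_algebraMap {A R : Type*} [CommRing A] [CommRing R] [Algebra A R]
    (Φ : τ → MvPolynomial σ A) (z : σ → A) :
    jacobianMatrix Φ (algebraMap A R ∘ z) = (jacobianMatrix Φ z).map (algebraMap A R) := by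
  ext i j
  exact aeval_algebraMap_apply (B := R) z _

theorem exists_eval_eq_zero_and_eval_ne_zero_of_aeval [Field K] [IsAlgClosed K] [Finite σ]
    {R : Type*} [CommRing R] [IsDomain R] [Algebra K R] {z : σ → R} {g : MvPolynomial σ K}
    (hg : aeval z g ≠ 0) :
    ∃ x : σ → K, (∀ f : MvPolynomial σ K, aeval z f = 0 → eval x f = 0) ∧ eval x g ≠ 0 := by
  by_contra! hzero
  have hprime := RingHom.ker_isPrime (aeval (R := K) z)
  refine hg (RingHom.mem_ker.mp ?_)
  rw [← IsPrime.vanishingIdeal_zeroLocus (K := K) (RingHom.ker (aeval (R := K) z)),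
    mem_vanishingIdeal_iff]
  intro x hx
  rw [aeval_eq_eval]
  exact hzero x fun f hf => by simpa only [aeval_eq_eval] using hx f hf

theorem aeval_ne_zero_of_eval_constantCoeff_ne_zero [CommRing K] {z : σ → PowerSeries K}
    {z₀ : σ → K} (hz : ∀ j, z j - (algebraMap K _ ∘ z₀) j ∈ Ideal.span {PowerSeries.X})
    {g : MvPolynomial σ K} (hg : eval z₀ g ≠ 0) : aeval z g ≠ 0 := by
  intro hzero
  have hdvd := Ideal.mem_span_singleton.mp (aeval_sub_aeval_mem hz g)
  rw [hzero, zero_sub, dvd_neg, aeval_algebraMap_apply, PowerSeries.X_dvd_iff, aeval_eq_eval]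
    at hdvd
  exact hg (by simpa using hdvd)

variable [Fintype σ] [Finite τ] [Field K] [IsAlgClosed K]

/-- Move along a power series arc on which `Φ i` vanishes for `i ∈ s` and equals the
uniformiser otherwise, then specialise. -/
theorem exists_eval_eq_zero_iff_mem {Φ : τ → MvPolynomial σ K} {z₀ : σ → K}
    (hz₀ : ∀ i, eval z₀ (Φ i) = 0) (hsurj : Function.Surjective (jacobianMatrix Φ z₀).mulVec)
    (s : Set τ) {g : MvPolynomial σ K} (hg : eval z₀ g ≠ 0) :
    ∃ x : σ → K, (∀ i, eval x (Φ i) = 0 ↔ i ∈ s) ∧ eval x g ≠ 0 := by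
  classical
  cases nonempty_fintype τ
  obtain ⟨B, hB⟩ := Matrix.mulVec_surjective_iff_exists_right_inverse.mp hsurj
  have hB' : jacobianMatrix Φ (algebraMap K (PowerSeries K) ∘ z₀) *
      B.map (algebraMap K (PowerSeries K)) = 1 := by
    rw [jacobianMatrix_algebraMap, ← Matrix.map_mul, hB, Matrix.map_one _ (map_zero _) (map_one _)]
  have hy (i : τ) : aeval (algebraMap K (PowerSeries K) ∘ z₀) (Φ i) -
      (if i ∈ s then 0 else PowerSeries.X) ∈ Ideal.span {(PowerSeries.X : PowerSeries K)} := by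
    rw [aeval_algebraMap_apply, aeval_eq_eval, hz₀, map_zero, zero_sub, neg_mem_iff,
      Ideal.mem_span_singleton]
    split_ifs <;> simp
  obtain ⟨z, hz, hzΦ⟩ := exists_aeval_eq_of_jacobianMatrix_mul_eq_one hB' hy
  have hzg : aeval z (g * ∏ i with i ∉ s, Φ i) ≠ 0 := by
    rw [map_mul, map_prod]
    refine mul_ne_zero (aeval_ne_zero_of_eval_constantCoeff_ne_zero hz hg)
      (Finset.prod_ne_zero_iff.mpr fun i hi => ?_)
    rw [hzΦ, if_neg (Finset.mem_filter.mp hi).2]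
    exact PowerSeries.X_ne_zero
  obtain ⟨x, hx, hxg⟩ := exists_eval_eq_zero_and_eval_ne_zero_of_aeval hzg
  rw [map_mul, map_prod, mul_ne_zero_iff, Finset.prod_ne_zero_iff] at hxg
  refine ⟨x, fun i => ⟨fun hi => by_contra fun his => hxg.2 i (by simpa using his) hi,
    fun his => hx _ ?_⟩, hxg.1⟩
  rw [hzΦ, if_pos his]

end PartialSmoothing

section Deformation

variable {K σ : Type*}

theorem pderiv_comm [CommRing K] (i j : σ) (f : MvPolynomial σ K) :
    pderiv i (pderiv j f) = pderiv j (pderiv i f) := by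
  classical
  have hzero : ⁅(pderiv i : Derivation K (MvPolynomial σ K) (MvPolynomial σ K)),
      (pderiv j : Derivation K (MvPolynomial σ K) (MvPolynomial σ K))⁆ = 0 := by
    refine derivation_ext fun k => ?_
    rw [Derivation.commutator_apply]
    simp only [pderiv_X, Pi.single_apply]
    split_ifs <;> simp
  simpa [Derivation.commutator_apply, sub_eq_zero] using DFunLike.congr_fun hzero f

/-- The Hessian matrix of a polynomial. -/
noncomputable def hessian [CommRing K] (F : MvPolynomial σ K) :
    Matrix σ σ (MvPolynomial σ K) :=
  Matrix.of fun j k => pderiv j (pderiv k F)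

/-- `x` is a critical point of the polynomial function `F` (not necessarily a zero of `F`) with
nonvanishing Hessian determinant. -/
structure IsNondegenerateCriticalPoint [CommRing K] [Fintype σ] [DecidableEq σ]
    (F : MvPolynomial σ K) (x : σ → K) : Prop where
  eval_pderiv (k : σ) : eval x (pderiv k F) = 0
  eval_det_hessian : eval x (hessian F).det ≠ 0

variable {ι : Type*}

theorem exists_eval_uncurry_ne_zero_imp_injective [CommRing K] [IsDomain K] [Finite ι]
    {P : ι → σ → K} (hP : Function.Injective P) :
    ∃ g : MvPolynomial (ι × σ) K, eval (Function.uncurry P) g ≠ 0 ∧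
      ∀ Q : ι → σ → K, eval (Function.uncurry Q) g ≠ 0 → Function.Injective Q := by
  classical
  cases nonempty_fintype ι
  choose k hk using fun t : {t : ι × ι // t.1 ≠ t.2} => Function.ne_iff.mp (hP.ne t.2)
  have heval (Q : ι → σ → K) : eval (Function.uncurry Q)
      (∏ t, (X (t.1.1, k t) - X (t.1.2, k t)) : MvPolynomial (ι × σ) K) ≠ 0 ↔
        ∀ t : {t : ι × ι // t.1 ≠ t.2}, Q t.1.1 (k t) ≠ Q t.1.2 (k t) := by
    simp [Finset.prod_ne_zero_iff, sub_ne_zero]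
  refine ⟨_, (heval P).mpr hk, fun Q hQ i j hij => by_contra fun hne => ?_⟩
  exact (heval Q).mp hQ ⟨(i, j), hne⟩ (by rw [hij])

theorem eval_uncurry_det_rename [CommRing K] {τ : Type*} [Fintype τ] [DecidableEq τ]
    (Q : ι → σ → K) (e : τ → ι) (f : τ → MvPolynomial σ K) :
    eval (Function.uncurry Q) (Matrix.of fun i k => rename (Prod.mk (e i)) (f k)).det =
      (Matrix.of fun i k => eval (Q (e i)) (f k)).det := by
  rw [RingHom.map_det]
  congr 1
  ext i k
  simp [eval_rename, Function.comp_def]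

variable {γ : Type*} [Fintype γ]

/-- The member with parameter `t` of the affine linear system `F + ∑ m, t m * H m`. -/
noncomputable def linearSystem [CommRing K] (F : MvPolynomial σ K) (H : γ → MvPolynomial σ K)
    (t : γ → K) : MvPolynomial σ K :=
  F + ∑ m, C (t m) * H m

/-- The value of the generic member of the linear system `F + ∑ m, t m * H m` at the `i`-th generic
point; the variables are the parameters `t m` and the coordinates of all points. -/
noncomputable def genericValue [CommRing K] (F : MvPolynomial σ K) (H : γ → MvPolynomial σ K)
    (i : ι) : MvPolynomial (γ ⊕ ι × σ) K :=
  rename (fun k => Sum.inr (i, k)) F +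
    ∑ m, X (Sum.inl m) * rename (fun k => Sum.inr (i, k)) (H m)

section CommRing

variable [CommRing K] (F : MvPolynomial σ K) (H : γ → MvPolynomial σ K)

theorem linearSystem_zero : linearSystem F H 0 = F := by
  simp [linearSystem]

theorem pderiv_linearSystem (k : σ) (t : γ → K) :
    pderiv k (linearSystem F H t) = linearSystem (pderiv k F) (fun m => pderiv k (H m)) t := by
  simp [linearSystem]

theorem eval_genericValue (i : ι) (t : γ → K) (Q : ι → σ → K) :
    eval (Sum.elim t (Function.uncurry Q)) (genericValue F H i) =
      eval (Q i) (linearSystem F H t) := by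
  simp [genericValue, linearSystem, eval_rename, Function.comp_def, Function.uncurry]

theorem directionalDerivative_genericValue [Fintype σ] [Fintype ι] (i : ι) (t : γ → K)
    (Q : ι → σ → K) (h : γ ⊕ ι × σ → K) :
    directionalDerivative (Sum.elim t (Function.uncurry Q)) h (genericValue F H i) =
      directionalDerivative (Q i) (fun k => h (Sum.inr (i, k))) (linearSystem F H t) +
        ∑ m, eval (Q i) (H m) * h (Sum.inl m) := by
  have hQ : Sum.elim t (Function.uncurry Q) ∘ (fun k => Sum.inr (i, k)) = Q i := rfl
  simp only [genericValue, linearSystem, map_add, map_sum, directionalDerivative_mul,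
    directionalDerivative_X, directionalDerivative_C, directionalDerivative_rename, aeval_X,
    aeval_C, aeval_rename, hQ, aeval_eq_eval, Sum.elim_inl, Function.comp_def,
    Finset.sum_add_distrib, Algebra.algebraMap_self, RingHom.id_apply, zero_mul, zero_add]
  simp only [mul_comm (h _)]
  ring

/-- The equations, in the parameters of the linear system and the coordinates of the points,
which say that all points are critical and that those indexed by `s` are zeros. -/
noncomputable def criticalSystem (s : Set ι) : s ⊕ ι × σ → MvPolynomial (γ ⊕ ι × σ) K :=
  Sum.elim (fun i => genericValue F H i)
    fun t => genericValue (pderiv t.2 F) (fun m => pderiv t.2 (H m)) t.1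

theorem eval_criticalSystem_inl {s : Set ι} (i : s) (t : γ → K) (Q : ι → σ → K) :
    eval (Sum.elim t (Function.uncurry Q)) (criticalSystem F H s (Sum.inl i)) =
      eval (Q i) (linearSystem F H t) :=
  eval_genericValue F H i.1 t Q

theorem eval_criticalSystem_inr {s : Set ι} (i : ι) (k : σ) (t : γ → K) (Q : ι → σ → K) :
    eval (Sum.elim t (Function.uncurry Q)) (criticalSystem F H s (Sum.inr (i, k))) =
      eval (Q i) (pderiv k (linearSystem F H t)) := by
  rw [pderiv_linearSystem]
  exact eval_genericValue _ _ i t Q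

/-- The Hessian determinant of the generic member of a linear system at the `i`-th generic point. -/
noncomputable def genericHessianDet [Fintype σ] [DecidableEq σ] (i : ι) :
    MvPolynomial (γ ⊕ ι × σ) K :=
  (Matrix.of fun j k =>
    genericValue (pderiv j (pderiv k F)) (fun m => pderiv j (pderiv k (H m))) i).det

theorem eval_genericHessianDet [Fintype σ] [DecidableEq σ] (i : ι) (t : γ → K) (Q : ι → σ → K) :
    eval (Sum.elim t (Function.uncurry Q)) (genericHessianDet F H i) =
      eval (Q i) (hessian (linearSystem F H t)).det := by
  rw [genericHessianDet, RingHom.map_det, RingHom.map_det]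
  congr 1
  ext j k
  simp [eval_genericValue, hessian, pderiv_linearSystem]

end CommRing

section Field

variable [Field K] [Fintype σ] [DecidableEq σ] {F : MvPolynomial σ K} {H : γ → MvPolynomial σ K}
  {P : ι → σ → K}

theorem IsNondegenerateCriticalPoint.exists_directionalDerivative_pderiv_eq {x : σ → K}
    (hx : IsNondegenerateCriticalPoint F x) (w : σ → K) :
    ∃ h, ∀ k, directionalDerivative x h (pderiv k F) = w k := by
  have hdet : IsUnit (jacobianMatrix (fun k => pderiv k F) x) := by
    rw [Matrix.isUnit_iff_isUnit_det, isUnit_iff_ne_zero, ← Matrix.det_transpose]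
    have hdet := hx.eval_det_hessian
    rwa [RingHom.map_det] at hdet
  obtain ⟨h, hh⟩ := Matrix.mulVec_surjective_iff_isUnit.mpr hdet w
  exact ⟨h, fun k => (jacobianMatrix_mulVec_apply _ x h k).symm.trans (congrFun hh k)⟩

theorem surjective_jacobianMatrix_criticalSystem_mulVec [Fintype ι]
    (hP : ∀ i, IsNondegenerateCriticalPoint F (P i)) {s : Set ι}
    (hH : Function.Surjective (Matrix.of fun (i : s) m => eval (P i) (H m)).mulVec) :
    Function.Surjective
      (jacobianMatrix (criticalSystem F H s) (Sum.elim 0 (Function.uncurry P))).mulVec := by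
  intro w
  obtain ⟨u, hu⟩ := hH fun i => w (Sum.inl i)
  choose v hv using fun i => (hP i).exists_directionalDerivative_pderiv_eq fun k =>
    w (Sum.inr (i, k)) - ∑ m, eval (P i) (pderiv k (H m)) * u m
  refine ⟨Sum.elim u (Function.uncurry v), funext ?_⟩
  rintro (i | ⟨i, k⟩)
  · have hcrit : directionalDerivative (P i) (v i) F = 0 := by
      simp [directionalDerivative_apply, aeval_eq_eval, (hP i).eval_pderiv]
    rw [jacobianMatrix_mulVec_apply]
    simp only [criticalSystem, Sum.elim_inl, directionalDerivative_genericValue, linearSystem_zero,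
      Sum.elim_inr, Function.uncurry_apply_pair]
    rw [hcrit, zero_add]
    exact congrFun hu i
  · rw [jacobianMatrix_mulVec_apply]
    simp only [criticalSystem, Sum.elim_inl, directionalDerivative_genericValue, linearSystem_zero,
      Sum.elim_inr, Function.uncurry_apply_pair]
    rw [hv, sub_add_cancel]

theorem exists_linearSystem_eval_eq_zero_iff_mem [IsAlgClosed K] [Finite ι]
    (hP : ∀ i, IsNondegenerateCriticalPoint F (P i))
    (hH : Function.Surjective
      (Matrix.of fun (i : {i | eval (P i) F = 0}) m => eval (P i) (H m)).mulVec)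
    {T : Set ι} (hT : ∀ i ∈ T, eval (P i) F = 0) {g : MvPolynomial (ι × σ) K}
    (hg : eval (Function.uncurry P) g ≠ 0) :
    ∃ (t : γ → K) (Q : ι → σ → K),
      (∀ i, IsNondegenerateCriticalPoint (linearSystem F H t) (Q i)) ∧
      (∀ i, eval (Q i) (linearSystem F H t) = 0 ↔ i ∈ T) ∧ eval (Function.uncurry Q) g ≠ 0 := by
  classical
  cases nonempty_fintype ι
  set s : Set ι := {i | eval (P i) F = 0}
  set z₀ : γ ⊕ ι × σ → K := Sum.elim 0 (Function.uncurry P) with hz₀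
  have hzero (j : s ⊕ ι × σ) : eval z₀ (criticalSystem F H s j) = 0 := by
    rcases j with i | ⟨i, k⟩
    · rw [eval_criticalSystem_inl, linearSystem_zero]
      exact i.2
    · rw [eval_criticalSystem_inr, linearSystem_zero, (hP i).eval_pderiv]
  have hopen : eval z₀ ((∏ i with i ∉ s, genericValue F H i) * (∏ i, genericHessianDet F H i) *
      rename Sum.inr g) ≠ 0 := by
    simp only [map_mul, map_prod, hz₀, eval_genericValue, eval_genericHessianDet, eval_rename,
      Sum.elim_comp_inr, linearSystem_zero, mul_ne_zero_iff, Finset.prod_ne_zero_iff]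
    exact ⟨⟨fun i hi => (Finset.mem_filter.mp hi).2, fun i _ => (hP i).eval_det_hessian⟩, hg⟩
  obtain ⟨z, hz, hzopen⟩ := exists_eval_eq_zero_iff_mem hzero
    (surjective_jacobianMatrix_criticalSystem_mulVec hP hH)
    {j | Sum.elim (fun i : s => (i : ι) ∈ T) (fun _ => True) j} hopen
  obtain ⟨t, Q, rfl⟩ : ∃ t Q, z = Sum.elim t (Function.uncurry Q) :=
    ⟨z ∘ Sum.inl, Function.curry (z ∘ Sum.inr), by simp⟩
  simp only [map_mul, map_prod, eval_genericValue, eval_genericHessianDet, eval_rename,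
    Sum.elim_comp_inr, mul_ne_zero_iff, Finset.prod_ne_zero_iff] at hzopen
  obtain ⟨⟨hoff, hhess⟩, hgQ⟩ := hzopen
  refine ⟨t, Q, fun i => ⟨fun k => ?_, hhess i (Finset.mem_univ i)⟩, fun i => ?_, hgQ⟩
  · rw [← eval_criticalSystem_inr (s := s)]
    exact (hz _).mpr trivial
  · by_cases hi : i ∈ s
    · rw [← eval_criticalSystem_inl F H ⟨i, hi⟩]
      exact hz _
    · exact iff_of_false (hoff i (by simpa using hi)) fun hiT => hi (hT i hiT)

end Field

end Deformation

section CriticalPoints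

variable {K σ : Type*} [Field K]

theorem linearIndependent_eval {κ : Type*} {x : κ → σ → K} (hx : Function.Injective x) :
    LinearIndependent K fun z (f : MvPolynomial σ K) => eval (x z) f :=
  (linearIndependent_monoidHom (MvPolynomial σ K) K).comp
    (fun z => (eval (x z) : MvPolynomial σ K →* K)) fun z z' hzz' => hx <| funext fun k => by
      simpa using DFunLike.congr_fun hzz' (X k)

/-- A polynomial is determined, modulo polynomials vanishing at all the points `x z`, by the span
of `b`; hence so is every evaluation functional. -/
theorem card_le_card_of_span_sup_eq_top {κ β : Type*} [Fintype κ] [Fintype β] {x : κ → σ → K}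
    (hx : Function.Injective x) {V : Submodule K (MvPolynomial σ K)}
    (hV : ∀ f ∈ V, ∀ z, eval (x z) f = 0) {b : β → MvPolynomial σ K}
    (hb : Submodule.span K (Set.range b) ⊔ V = ⊤) :
    Fintype.card κ ≤ Fintype.card β := by
  let M : Matrix β κ K := Matrix.of fun t z => eval (x z) (b t)
  have hM : Function.Injective M.mulVecLin := by
    rw [← LinearMap.ker_eq_bot, LinearMap.ker_eq_bot']
    intro c hc
    let φ : MvPolynomial σ K →ₗ[K] K := ∑ z, c z • (aeval (x z)).toLinearMap
    have hφ (f : MvPolynomial σ K) : φ f = ∑ z, c z * eval (x z) f := by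
      simp [φ, LinearMap.sum_apply, aeval_eq_eval]
    have hle : Submodule.span K (Set.range b) ⊔ V ≤ LinearMap.ker φ := by
      rw [sup_le_iff, Submodule.span_le]
      refine ⟨?_, fun f hf => by simp [hφ, hV f hf]⟩
      rintro _ ⟨t, rfl⟩
      have hct := congrFun hc t
      rw [SetLike.mem_coe, LinearMap.mem_ker, hφ]
      simpa [M, Matrix.mulVec, dotProduct, mul_comm] using hct
    have hrel : ∑ z, c z • (fun f => eval (x z) f) = 0 := by
      funext f
      have hf : φ f = 0 := hle (hb ▸ Submodule.mem_top)
      simpa only [hφ, Finset.sum_apply, Pi.smul_apply, smul_eq_mul, Pi.zero_apply] using hf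
    have hind := linearIndependent_eval hx
    rw [Fintype.linearIndependent_iff] at hind
    exact funext (hind c hrel)
  simpa using LinearMap.finrank_le_finrank_of_injective hM

theorem span_monomial_sup_ideal_span_eq_top {τ : Type*} (w : (σ →₀ ℕ) →+ ℕ)
    {D : τ → MvPolynomial σ K} {e : τ → σ →₀ ℕ} (hlead : ∀ k, coeff (e k) (D k) ≠ 0)
    (hlow : ∀ k, ∀ d ∈ (D k).support, d ≠ e k → w d < w (e k)) :
    Submodule.span K ((fun s => monomial s (1 : K)) '' {s | ∀ k, ¬ e k ≤ s}) ⊔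
      (Ideal.span (Set.range D)).restrictScalars K = ⊤ := by
  classical
  set W := Submodule.span K ((fun s => monomial s (1 : K)) '' {s | ∀ k, ¬ e k ≤ s}) ⊔
    (Ideal.span (Set.range D)).restrictScalars K
  have hmonomial (s : σ →₀ ℕ) : monomial s (1 : K) ∈ W := by
    induction hs : w s using Nat.strong_induction_on generalizing s with
    | _ N ih =>
    by_cases hred : ∀ k, ¬ e k ≤ s
    · exact Submodule.mem_sup_left (Submodule.subset_span ⟨s, hred, rfl⟩)
    · push Not at hred
      obtain ⟨k, hk⟩ := hred
      obtain ⟨u, rfl⟩ := exists_add_of_le hk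
      have hmul : monomial u (1 : K) * D k ∈ W := Submodule.mem_sup_right
        (Ideal.mul_mem_left _ _ (Ideal.subset_span ⟨k, rfl⟩))
      have hexpand : monomial u (1 : K) * D k =
          ∑ d ∈ (D k).support, coeff d (D k) • monomial (d + u) (1 : K) := by
        conv_lhs => rw [(D k).as_sum, Finset.mul_sum]
        simp [monomial_mul, smul_monomial, add_comm u]
      rw [hexpand, ← Finset.add_sum_erase _ _ (mem_support_iff.mpr (hlead k))] at hmul
      refine (Submodule.smul_mem_iff W (hlead k)).mp ((Submodule.add_mem_iff_left W ?_).mp hmul)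
      refine sum_mem fun d hd => W.smul_mem _ (ih _ ?_ _ rfl)
      rw [Finset.mem_erase] at hd
      rw [← hs, map_add, map_add]
      exact Nat.add_lt_add_right (hlow k d hd.2 hd.1) _
  refine eq_top_iff.mpr fun f _ => ?_
  rw [f.as_sum]
  refine sum_mem fun s _ => ?_
  simpa [smul_monomial] using W.smul_mem (coeff s f) (hmonomial s)

end CriticalPoints

section WeierstrassPolynomial

variable {K : Type} [Field K] {p q : ℕ}

theorem wPoly_eq_monomial (a : idxSet p q → K) :
    wPoly K p q a = monomial (Finsupp.single 1 p) 1 - monomial (Finsupp.single 0 q) 1 +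
      ∑ i : idxSet p q, monomial (Finsupp.single 0 i.1.1 + Finsupp.single 1 i.1.2) (a i) := by
  simp only [wPoly, X_pow_eq_monomial, C_mul_monomial, monomial_mul, mul_one]

theorem coeff_wPoly (a : idxSet p q → K) (d : Fin 2 →₀ ℕ) (hd : p * q ≤ d 0 * p + d 1 * q) :
    coeff d (wPoly K p q a) = (if d = Finsupp.single 1 p then 1 else 0) -
      if d = Finsupp.single 0 q then 1 else 0 := by
  have hi (i : idxSet p q) : Finsupp.single 0 i.1.1 + Finsupp.single 1 i.1.2 ≠ d := by
    rintro rfl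
    have hlt := (Finset.mem_filter.mp i.2).2
    have hle : p * q ≤ i.1.1 * p + i.1.2 * q := by simpa using hd
    omega
  simp only [wPoly_eq_monomial, coeff_add, coeff_sub, coeff_sum, coeff_monomial, hi, if_false,
    Finset.sum_const_zero, add_zero, eq_comm (a := d)]

theorem coeff_pderiv_wPoly_ne_zero (hp : (p : K) ≠ 0) (hq : (q : K) ≠ 0) (a : idxSet p q → K)
    (k : Fin 2) :
    coeff (![Finsupp.single 0 (q - 1), Finsupp.single 1 (p - 1)] k)
      (pderiv k (wPoly K p q a)) ≠ 0 := by
  have hp₀ : p ≠ 0 := ne_zero_of_map (f := Nat.castRingHom K) hp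
  have hq₀ : q ≠ 0 := ne_zero_of_map (f := Nat.castRingHom K) hq
  obtain ⟨p, rfl⟩ := Nat.exists_eq_add_of_le' (Nat.one_le_iff_ne_zero.mpr hp₀)
  obtain ⟨q, rfl⟩ := Nat.exists_eq_add_of_le' (Nat.one_le_iff_ne_zero.mpr hq₀)
  push_cast at hp hq
  fin_cases k
  · simpa [coeff_pderiv, ← Finsupp.single_add, coeff_wPoly, mul_comm,
      Finsupp.single_eq_single_iff, ← neg_add_rev, add_comm (1 : K)] using hq
  · simpa [coeff_pderiv, ← Finsupp.single_add, coeff_wPoly, mul_comm,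
      Finsupp.single_eq_single_iff] using hp

theorem weight_vec_two (d : Fin 2 →₀ ℕ) : Finsupp.weight ![p, q] d = d 0 * p + d 1 * q := by
  simp [Finsupp.weight_apply, Finsupp.sum_fintype]

theorem weight_lt_of_mem_support_pderiv_wPoly (hp : p ≠ 0) (hq : q ≠ 0) (a : idxSet p q → K)
    (k : Fin 2) {d : Fin 2 →₀ ℕ} (hd : d ∈ (pderiv k (wPoly K p q a)).support)
    (hne : d ≠ ![Finsupp.single 0 (q - 1), Finsupp.single 1 (p - 1)] k) :
    Finsupp.weight ![p, q] d <
      Finsupp.weight ![p, q] (![Finsupp.single 0 (q - 1), Finsupp.single 1 (p - 1)] k) := by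
  set e : Fin 2 →₀ ℕ :=
    (![Finsupp.single 0 (q - 1), Finsupp.single 1 (p - 1)] : Fin 2 → Fin 2 →₀ ℕ) k with he
  have hek : e + Finsupp.single k 1 =
      (![Finsupp.single 0 q, Finsupp.single 1 p] : Fin 2 → Fin 2 →₀ ℕ) k := by
    have hp₁ : p - 1 + 1 = p := Nat.succ_pred hp
    have hq₁ : q - 1 + 1 = q := Nat.succ_pred hq
    ext j
    fin_cases k <;> fin_cases j <;> simp [he, hp₁, hq₁]
  have hwk : Finsupp.weight ![p, q] (e + Finsupp.single k 1) = p * q := by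
    rw [hek]
    fin_cases k <;> simp [weight_vec_two, mul_comm]
  rw [mem_support_iff, coeff_pderiv] at hd
  contrapose! hd
  refine mul_eq_zero_of_left ?_ _
  have hdk : d + Finsupp.single k 1 ≠
      (![Finsupp.single 0 q, Finsupp.single 1 p] : Fin 2 → Fin 2 →₀ ℕ) k := by
    rwa [← hek, Ne, add_left_inj]
  rw [coeff_wPoly]
  · fin_cases k <;> simp_all [Finsupp.ext_iff, Fin.forall_fin_two]
  · rw [← weight_vec_two, ← hwk, map_add, map_add]
    exact Nat.add_le_add_right hd _

theorem card_le_of_eval_pderiv_wPoly_eq_zero (hp : (p : K) ≠ 0) (hq : (q : K) ≠ 0)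
    (a : idxSet p q → K) {κ : Type*} [Fintype κ] {x : κ → Fin 2 → K} (hx : Function.Injective x)
    (hcrit : ∀ z k, eval (x z) (pderiv k (wPoly K p q a)) = 0) :
    Fintype.card κ ≤ (q - 1) * (p - 1) := by
  let b (t : Fin (q - 1) × Fin (p - 1)) : MvPolynomial (Fin 2) K :=
    monomial (Finsupp.single 0 (t.1 : ℕ) + Finsupp.single 1 (t.2 : ℕ)) 1
  have hb : (fun s => monomial s (1 : K)) ''
      {s | ∀ k, ¬ (![Finsupp.single 0 (q - 1), Finsupp.single 1 (p - 1)] k : Fin 2 →₀ ℕ) ≤ s} ⊆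
      Set.range b := by
    rintro _ ⟨s, hs, rfl⟩
    have h0 : s 0 < q - 1 := by simpa [Nat.lt_sub_iff_add_lt] using hs 0
    have h1 : s 1 < p - 1 := by simpa [Nat.lt_sub_iff_add_lt] using hs 1
    refine ⟨(⟨s 0, h0⟩, ⟨s 1, h1⟩), congrArg (fun s => monomial s (1 : K)) ?_⟩
    ext k
    fin_cases k <;> simp
  have htop := span_monomial_sup_ideal_span_eq_top (Finsupp.weight ![p, q])
    (coeff_pderiv_wPoly_ne_zero hp hq a) fun k d =>
      weight_lt_of_mem_support_pderiv_wPoly (ne_zero_of_map (f := Nat.castRingHom K) hp)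
        (ne_zero_of_map (f := Nat.castRingHom K) hq) a k
  have hvanish : Ideal.span (Set.range fun k => pderiv k (wPoly K p q a)) ≤
      ⨅ z, RingHom.ker (eval (x z)) := by
    rw [Ideal.span_le]
    rintro _ ⟨k, rfl⟩
    exact (Submodule.mem_iInf _).mpr fun z => hcrit z k
  simpa using card_le_card_of_span_sup_eq_top hx
    (fun f hf z => (Submodule.mem_iInf _).mp (hvanish hf) z)
    (eq_top_mono (sup_le_sup_right (Submodule.span_mono hb) _) htop)

theorem exists_eq_of_eval_pderiv_wPoly_eq_zero (hp : (p : K) ≠ 0) (hq : (q : K) ≠ 0)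
    {a : idxSet p q → K} {x : Fin (q - 1) × Fin (p - 1) → Fin 2 → K}
    (hx : Function.Injective x)
    (hcrit : ∀ z k, eval (x z) (pderiv k (wPoly K p q a)) = 0) {y : Fin 2 → K}
    (hy : ∀ k, eval y (pderiv k (wPoly K p q a)) = 0) : ∃ z, x z = y := by
  by_contra! hnot
  have hcard := card_le_of_eval_pderiv_wPoly_eq_zero hp hq a
    (x := fun o : Option (Fin (q - 1) × Fin (p - 1)) => o.elim y x)
    (Option.injective_iff.mpr ⟨hx, by rintro ⟨z, hz⟩; exact hnot z hz⟩)
    (by rintro (_ | z); exacts [hy, hcrit z])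
  simp at hcard

end WeierstrassPolynomial

section LinearAlgebra

theorem exists_det_submatrix_ne_zero {K m n : Type*} [Field K] [Finite m] [Fintype n]
    [DecidableEq n] {A : Matrix m n K} (hA : LinearIndependent K A.col) :
    ∃ e : n → m, Function.Injective e ∧ (A.submatrix e id).det ≠ 0 := by
  cases nonempty_fintype m
  have hrank : Module.finrank K (Submodule.span K (Set.range A.row)) = Fintype.card n := by
    rw [← Matrix.rank_eq_finrank_span_row, Matrix.rank_eq_finrank_span_cols,
      finrank_span_eq_card hA]
  obtain ⟨κ, e, he, hspan, hli⟩ := exists_linearIndependent' K A.row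
  have : Fintype κ := Fintype.ofInjective e he
  have hcard : Fintype.card n = Fintype.card κ := by
    rw [← hrank, ← hspan, finrank_span_eq_card hli]
  refine ⟨_, he.comp (Fintype.equivOfCardEq hcard).injective, ?_⟩
  rw [← isUnit_iff_ne_zero, ← Matrix.isUnit_iff_isUnit_det,
    ← Matrix.linearIndependent_rows_iff_isUnit]
  exact hli.comp _ (Fintype.equivOfCardEq hcard).injective

theorem linearIndependent_of_injective_degree {K ι : Type*} [Field K] {f : ι → Polynomial K}
    (hf : ∀ i, f i ≠ 0) (hinj : Function.Injective fun i => (f i).degree) :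
    LinearIndependent K f := by
  refine linearIndependent_iff'.mpr fun s c hc i hi => by_contra fun hci => ?_
  have hdeg (j : ι) (hj : c j ≠ 0) : (c j • f j).degree = (f j).degree :=
    Polynomial.degree_smul_of_smul_regular _ (IsSMulRegular.of_ne_zero hj)
  have hsum := Polynomial.degree_sum_eq_of_disjoint (fun j => c j • f j) s <| by
    rintro j ⟨-, hj⟩ j' ⟨-, hj'⟩ hne
    simp only [Function.onFun, Function.comp_apply]
    rw [hdeg j (left_ne_zero_of_smul hj), hdeg j' (left_ne_zero_of_smul hj')]
    exact hinj.ne hne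
  rw [hc, Polynomial.degree_zero] at hsum
  have hle := Finset.le_sup (f := fun j => (c j • f j).degree) hi
  rw [← hsum, le_bot_iff, hdeg i hci, Polynomial.degree_eq_bot] at hle
  exact hf i hle

end LinearAlgebra

section Dickson

open Polynomial (dickson)

section CommRing

variable {R : Type*} [CommRing R]

theorem eval_derivative_dickson_one_one_mul_sub (n : ℕ) {u v : R} (h : u * v = 1) :
    (dickson 1 (1 : R) n).derivative.eval (u + v) * (u - v) = n * (u ^ n - v ^ n) := by
  induction n using Nat.twoStepInduction with
  | zero => simp [Polynomial.dickson_zero]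
  | one => simp
  | more n ih₀ ih₁ =>
    have hD := Polynomial.dickson_one_one_eval_add_inv u v h (n + 1)
    simp only [Polynomial.dickson_add_two, Polynomial.derivative_sub, Polynomial.derivative_mul,
      Polynomial.derivative_X, Polynomial.derivative_C, Polynomial.eval_sub, Polynomial.eval_add,
      Polynomial.eval_mul, Polynomial.eval_X, Polynomial.eval_C, Polynomial.eval_one,
      Polynomial.eval_zero, hD]
    push_cast at ih₁ ⊢
    linear_combination (u + v) * ih₁ - ih₀ + (n * u ^ n - n * v ^ n) * h

theorem eval_derivative_derivative_dickson_one_one_mul_sub_sq (n : ℕ) {u v : R} (h : u * v = 1) :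
    (dickson 1 (1 : R) n).derivative.derivative.eval (u + v) * (u - v) ^ 2 =
      n ^ 2 * (u ^ n + v ^ n) - (dickson 1 (1 : R) n).derivative.eval (u + v) * (u + v) := by
  induction n using Nat.twoStepInduction with
  | zero => simp [Polynomial.dickson_zero]
  | one => simp
  | more n ih₀ ih₁ =>
    have hD := Polynomial.dickson_one_one_eval_add_inv u v h (n + 1)
    have hD' := eval_derivative_dickson_one_one_mul_sub (n + 1) h
    simp only [Polynomial.dickson_add_two, Polynomial.derivative_sub, Polynomial.derivative_mul,
      Polynomial.derivative_X, Polynomial.derivative_C, Polynomial.eval_sub, Polynomial.eval_add,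
      Polynomial.eval_mul, Polynomial.eval_X, Polynomial.eval_C, Polynomial.eval_one,
      Polynomial.derivative_add, Polynomial.derivative_one, Polynomial.derivative_zero,
      Polynomial.eval_zero, hD]
    push_cast at ih₁ hD' ⊢
    linear_combination (u + v) * ih₁ - ih₀ + 2 * (u - v) * hD' + (n ^ 2 * (u ^ n + v ^ n)) * h

variable (k : ℕ) (a : R)

theorem degree_X_mul_sub_C_mul_le {f g : Polynomial R} {n : ℕ} (hf : f.degree ≤ n)
    (hg : g.degree ≤ ((n + 1 : ℕ) : WithBot ℕ)) :
    (Polynomial.X * f - Polynomial.C a * g).degree ≤ ((n + 1 : ℕ) : WithBot ℕ) := by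
  rw [← max_self ((n + 1 : ℕ) : WithBot ℕ)]
  rw [← Polynomial.smul_eq_C_mul]
  refine Polynomial.degree_sub_le_of_le ?_ ((Polynomial.degree_smul_le a g).trans hg)
  rw [add_comm n, Nat.cast_add]
  exact Polynomial.degree_mul_le_of_le Polynomial.degree_X_le hf

theorem degree_dickson_le (n : ℕ) : (dickson k a n).degree ≤ n := by
  induction n using Nat.twoStepInduction with
  | zero =>
    have hC : (3 - k : Polynomial R) = Polynomial.C (3 - k : R) := by
      simp only [map_sub, map_ofNat, map_natCast]
    rw [Polynomial.dickson_zero, hC]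
    exact Polynomial.degree_C_le
  | one => simpa using Polynomial.degree_X_le
  | more n ih₀ ih₁ =>
    rw [Polynomial.dickson_add_two]
    exact degree_X_mul_sub_C_mul_le a ih₁ (ih₀.trans (Nat.cast_le.mpr (Nat.le_add_right n 2)))

theorem degree_dickson_succ_sub_X_pow_le (n : ℕ) :
    (dickson k a (n + 1) - Polynomial.X ^ (n + 1)).degree ≤ (n : WithBot ℕ) := by
  induction n with
  | zero => simp
  | succ n ih =>
    have hrec : dickson k a (n + 1 + 1) - Polynomial.X ^ (n + 1 + 1) =
        Polynomial.X * (dickson k a (n + 1) - Polynomial.X ^ (n + 1)) -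
          Polynomial.C a * dickson k a n := by
      rw [Polynomial.dickson_add_two]
      ring
    rw [hrec]
    exact degree_X_mul_sub_C_mul_le a ih
      ((degree_dickson_le k a n).trans (Nat.cast_le.mpr n.le_succ))

theorem degree_dickson_sub_X_pow_lt {n : ℕ} (hn : n ≠ 0) :
    (dickson k a n - Polynomial.X ^ n).degree < (n : WithBot ℕ) := by
  obtain ⟨n, rfl⟩ := Nat.exists_eq_succ_of_ne_zero hn
  refine (degree_dickson_succ_sub_X_pow_le k a n).trans_lt ?_
  exact Nat.cast_lt.mpr n.lt_succ_self

theorem degree_dickson [Nontrivial R] {n : ℕ} (hn : n ≠ 0) : (dickson k a n).degree = n := by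
  rw [← sub_add_cancel (dickson k a n) (Polynomial.X ^ n),
    Polynomial.degree_add_eq_right_of_degree_lt, Polynomial.degree_X_pow]
  rw [Polynomial.degree_X_pow]
  exact degree_dickson_sub_X_pow_lt k a hn

end CommRing

section Field

variable {K : Type*} [Field K] {u w : K} {n : ℕ}

/-- The parametrisation `u ↦ u + u⁻¹` which linearises the Dickson polynomials `D_n` with parameter
`1`: these are Chebyshev polynomials, normalised by `D_n(u + u⁻¹) = uⁿ + u⁻ⁿ`. -/
def joukowsky (u : K) : K := u + u⁻¹

theorem eval_dickson_joukowsky (hu : u ≠ 0) (n : ℕ) :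
    (dickson 1 (1 : K) n).eval (joukowsky u) = joukowsky (u ^ n) := by
  rw [joukowsky, Polynomial.dickson_one_one_eval_add_inv _ _ (mul_inv_cancel₀ hu), joukowsky,
    inv_pow]

theorem joukowsky_inv (u : K) : joukowsky u⁻¹ = joukowsky u := by
  rw [joukowsky, joukowsky, inv_inv, add_comm]

theorem joukowsky_neg (u : K) : joukowsky (-u) = -joukowsky u := by
  rw [joukowsky, joukowsky, inv_neg, neg_add]

theorem joukowsky_eq_joukowsky_iff (hu : u ≠ 0) (hw : w ≠ 0) :
    joukowsky u = joukowsky w ↔ u = w ∨ u * w = 1 := by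
  rw [← sub_eq_zero, ← sub_eq_zero (a := u), ← sub_eq_zero (a := u * w), ← mul_eq_zero,
    ← mul_eq_zero_iff_right (mul_ne_zero hu hw)]
  refine Eq.congr ?_ rfl
  simp only [joukowsky]
  field_simp
  ring

theorem inv_pow_eq_pow_of_pow_two_mul_eq_one (hu : u ^ (2 * n) = 1) : u⁻¹ ^ n = u ^ n := by
  rw [inv_pow]
  exact inv_eq_of_mul_eq_one_left (by rw [← pow_add, ← two_mul, hu])

theorem sub_inv_ne_zero (hu : u ^ 2 ≠ 1) (h0 : u ≠ 0) : u - u⁻¹ ≠ 0 := by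
  rw [sub_ne_zero, Ne, self_eq_inv₀]
  rintro (rfl | rfl | rfl) <;> simp_all

theorem eval_derivative_dickson_joukowsky [NeZero n] (hu : u ^ (2 * n) = 1) (hu2 : u ^ 2 ≠ 1) :
    (dickson 1 (1 : K) n).derivative.eval (joukowsky u) = 0 := by
  have h0 : u ≠ 0 := (IsUnit.of_pow_eq_one hu (NeZero.ne (2 * n))).ne_zero
  refine (mul_eq_zero.mp ?_).resolve_right (sub_inv_ne_zero hu2 h0)
  rw [joukowsky, eval_derivative_dickson_one_one_mul_sub n (mul_inv_cancel₀ h0),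
    inv_pow_eq_pow_of_pow_two_mul_eq_one hu, sub_self, mul_zero]

theorem eval_derivative_derivative_dickson_joukowsky_ne_zero [NeZero ((2 * n : ℕ) : K)]
    (hu : u ^ (2 * n) = 1) (hu2 : u ^ 2 ≠ 1) :
    (dickson 1 (1 : K) n).derivative.derivative.eval (joukowsky u) ≠ 0 := by
  have hn := NeZero.ne ((2 * n : ℕ) : K)
  rw [Nat.cast_mul, Nat.cast_ofNat, mul_ne_zero_iff] at hn
  have : NeZero n := ⟨by rintro rfl; simp at hn⟩
  have h0 : u ≠ 0 := (IsUnit.of_pow_eq_one hu (NeZero.ne (2 * n))).ne_zero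
  have hD := eval_derivative_derivative_dickson_one_one_mul_sub_sq n (mul_inv_cancel₀ h0)
  rw [← joukowsky, eval_derivative_dickson_joukowsky hu hu2, zero_mul, sub_zero,
    inv_pow_eq_pow_of_pow_two_mul_eq_one hu, ← two_mul] at hD
  refine left_ne_zero_of_mul (hD.trans_ne ?_)
  exact mul_ne_zero (pow_ne_zero 2 hn.2) (mul_ne_zero hn.1 (pow_ne_zero n h0))

section PrimitiveRoot

variable {ω : K}

theorem pow_half_eq_neg_one [NeZero n] (hω : IsPrimitiveRoot ω (2 * n)) : ω ^ n = -1 :=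
  (hω.pow (NeZero.pos _) (mul_comm _ _)).eq_neg_one_of_two_right

theorem pow_sq_ne_one_iff_not_dvd (hω : IsPrimitiveRoot ω (2 * n)) {k : ℕ} :
    (ω ^ k) ^ 2 ≠ 1 ↔ ¬ n ∣ k := by
  rw [← pow_mul, mul_comm, Ne, hω.pow_eq_one_iff_dvd, Nat.mul_dvd_mul_iff_left two_pos]

theorem pow_pow_two_mul_eq_one (hω : IsPrimitiveRoot ω (2 * n)) (k : ℕ) :
    (ω ^ k) ^ (2 * n) = 1 := by
  rw [pow_right_comm, hω.pow_eq_one, one_pow]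

theorem pow_succ_sq_ne_one (hω : IsPrimitiveRoot ω (2 * n)) (i : Fin (n - 1)) :
    (ω ^ (i + 1 : ℕ)) ^ 2 ≠ 1 :=
  (pow_sq_ne_one_iff_not_dvd hω).mpr (Nat.not_dvd_of_pos_of_lt i.1.succ_pos (by omega))

theorem eq_of_joukowsky_pow_eq [NeZero n] (hω : IsPrimitiveRoot ω (2 * n))
    {i j : ℕ} (hi : i < n) (hj : j < n) (h : joukowsky (ω ^ i) = joukowsky (ω ^ j)) : i = j := by
  have h0 : ω ≠ 0 := hω.ne_zero (NeZero.ne _)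
  rcases (joukowsky_eq_joukowsky_iff (pow_ne_zero i h0) (pow_ne_zero j h0)).mp h with h | h
  · exact hω.pow_inj (by omega) (by omega) h
  · rw [← pow_add] at h
    have := Nat.eq_zero_of_dvd_of_lt (hω.dvd_of_pow_eq_one _ h) (by omega)
    omega

theorem exists_joukowsky_pow_succ_eq [NeZero n] (hω : IsPrimitiveRoot ω (2 * n))
    (hu : u ^ (2 * n) = 1) (hu2 : u ^ 2 ≠ 1) :
    ∃ i : Fin (n - 1), joukowsky (ω ^ (i + 1 : ℕ)) = joukowsky u := by
  have h0 : ω ≠ 0 := hω.ne_zero (NeZero.ne _)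
  obtain ⟨j, hj, rfl⟩ := hω.eq_pow_of_pow_eq_one hu
  have hdvd := (pow_sq_ne_one_iff_not_dvd hω).mp hu2
  have hj0 : j ≠ 0 := fun h => hdvd (h ▸ dvd_zero n)
  have hjn : j ≠ n := fun h => hdvd h.symm.dvd
  rcases lt_or_gt_of_ne hjn with hlt | hgt
  · exact ⟨⟨j - 1, by omega⟩, by rw [Nat.sub_add_cancel (by omega)]⟩
  · refine ⟨⟨2 * n - j - 1, by omega⟩, ?_⟩
    rw [Nat.sub_add_cancel (by omega), pow_sub₀ _ h0 hj.le, hω.pow_eq_one, one_mul, joukowsky_inv]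

theorem eval_dickson_joukowsky_pow [NeZero n] (hω : IsPrimitiveRoot ω (2 * n)) (i : ℕ) :
    (dickson 1 (1 : K) n).eval (joukowsky (ω ^ i)) = joukowsky ((-1) ^ i) := by
  rw [eval_dickson_joukowsky (pow_ne_zero i (hω.ne_zero (NeZero.ne _))), pow_right_comm,
    pow_half_eq_neg_one hω]

theorem two_ne_zero_of_isPrimitiveRoot [NeZero n] (hω : IsPrimitiveRoot ω (2 * n)) :
    (2 : K) ≠ 0 := by
  have h := hω.neZero'.ne
  rw [Nat.cast_mul, Nat.cast_ofNat] at h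
  exact left_ne_zero_of_mul h

theorem eval_dickson_joukowsky_pow_ne_zero [NeZero n] (hω : IsPrimitiveRoot ω (2 * n)) (i : ℕ) :
    (dickson 1 (1 : K) n).eval (joukowsky (ω ^ i)) ≠ 0 := by
  have hJ : joukowsky (1 : K) ≠ 0 := by
    rw [joukowsky, inv_one, one_add_one_eq_two]
    exact two_ne_zero_of_isPrimitiveRoot hω
  rw [eval_dickson_joukowsky_pow hω]
  rcases neg_one_pow_eq_or K i with h | h <;> rw [h]
  · exact hJ
  · rwa [joukowsky_neg, neg_ne_zero]

theorem eval_dickson_joukowsky_pow_rev [NeZero n] (hω : IsPrimitiveRoot ω (2 * n))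
    (hn : Odd n) (i : Fin (n - 1)) :
    (dickson 1 (1 : K) n).eval (joukowsky (ω ^ (i.rev + 1 : ℕ))) =
      -(dickson 1 (1 : K) n).eval (joukowsky (ω ^ (i + 1 : ℕ))) := by
  have hi : (i.rev + 1 : ℕ) + (i + 1) = n := by
    rw [Fin.val_rev]
    omega
  have hneg : (-1 : K) ^ (i.rev + 1 : ℕ) = -(-1) ^ (i + 1 : ℕ) := by
    have hprod : (-1 : K) ^ (i.rev + 1 : ℕ) * (-1) ^ (i + 1 : ℕ) = -1 := by
      rw [← pow_add, hi, hn.neg_one_pow]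
    have hsq : (-1 : K) ^ (i + 1 : ℕ) * (-1) ^ (i + 1 : ℕ) = 1 := by
      rw [← mul_pow, neg_one_mul, neg_neg, one_pow]
    linear_combination (-1) ^ (i + 1 : ℕ) * hprod - (-1) ^ (i.rev + 1 : ℕ) * hsq
  rw [eval_dickson_joukowsky_pow hω, eval_dickson_joukowsky_pow hω, hneg, joukowsky_neg]

theorem eval_dickson_joukowsky_pow_rev_ne [NeZero n] (hω : IsPrimitiveRoot ω (2 * n))
    (hn : Odd n) (i : Fin (n - 1)) :
    (dickson 1 (1 : K) n).eval (joukowsky (ω ^ (i.rev + 1 : ℕ))) ≠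
      (dickson 1 (1 : K) n).eval (joukowsky (ω ^ (i + 1 : ℕ))) := by
  rw [eval_dickson_joukowsky_pow_rev hω hn, Ne, neg_eq_iff_add_eq_zero, ← two_mul]
  exact mul_ne_zero (two_ne_zero_of_isPrimitiveRoot hω) (eval_dickson_joukowsky_pow_ne_zero hω _)

end PrimitiveRoot

end Field

end Dickson

section GapMonomials

open Polynomial (dickson)

variable {p q : ℕ}

/-- The pairs `(a, b)` with `ap + bq < (p - 1)(q - 1)`, encoded in the box `a < q - 1`, `b < p - 1`
which contains all of them. -/
def gapSet (p q : ℕ) : Finset (Fin (q - 1) × Fin (p - 1)) :=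
  {m | (m.1 : ℕ) * p + m.2 * q < (p - 1) * (q - 1)}

theorem mem_gapSet {m : Fin (q - 1) × Fin (p - 1)} :
    m ∈ gapSet p q ↔ (m.1 : ℕ) * p + m.2 * q < (p - 1) * (q - 1) := by
  simp [gapSet]

/-- The monomial `X ^ a * Y ^ b` attached to a pair `(a, b)` in `gapSet p q`. -/
noncomputable def gapMonomial (K : Type*) [CommSemiring K] (m : gapSet p q) :
    MvPolynomial (Fin 2) K :=
  X 0 ^ (m.1.1 : ℕ) * X 1 ^ (m.1.2 : ℕ)

theorem fst_lt_of_mul_add_mul_lt {a b : ℕ} (h : a * p + b * q < (p - 1) * (q - 1)) :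
    a < q - 1 := by
  refine lt_of_mul_lt_mul_right (a := p - 1) ?_ (Nat.zero_le _)
  calc a * (p - 1) ≤ a * p := Nat.mul_le_mul_left a (Nat.sub_le p 1)
    _ ≤ a * p + b * q := Nat.le_add_right _ _
    _ < (p - 1) * (q - 1) := h
    _ = (q - 1) * (p - 1) := mul_comm _ _

theorem exists_mem_gapSet {a b : ℕ} (h : a * p + b * q < (p - 1) * (q - 1)) :
    ∃ m ∈ gapSet p q, (m.1 : ℕ) = a ∧ (m.2 : ℕ) = b :=
  ⟨(⟨a, fst_lt_of_mul_add_mul_lt h⟩,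
    ⟨b, fst_lt_of_mul_add_mul_lt (p := q) (b := a) (by rwa [add_comm, mul_comm (q - 1)])⟩),
    mem_gapSet.mpr h, rfl, rfl⟩

theorem mul_add_mul_lt_of_le {a a' b b' : ℕ} (hq : q = a + a' + 2) (hp : p = b + b' + 2)
    (h : (p - 1) * (q - 1) ≤ a * p + b * q) : a' * p + b' * q < (p - 1) * (q - 1) := by
  have hq1 : q - 1 = a + a' + 1 := by omega
  have hp1 : p - 1 = b + b' + 1 := by omega
  rw [hq1, hp1] at h ⊢
  subst hq hp
  nlinarith

theorem rev_mem_gapSet_of_notMem {m : Fin (q - 1) × Fin (p - 1)} (hm : m ∉ gapSet p q) :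
    Prod.map Fin.rev Fin.rev m ∈ gapSet p q := by
  rw [mem_gapSet, not_lt] at hm
  refine mem_gapSet.mpr (mul_add_mul_lt_of_le ?_ ?_ hm) <;>
  · simp only [Prod.map_fst, Prod.map_snd, Fin.val_rev]
    omega

theorem card_le_two_mul_card_of_notMem_imp_mem {α : Type*} [Fintype α] {s : Finset α} {f : α → α}
    (hf : Function.Injective f) (h : ∀ x ∉ s, f x ∈ s) : Fintype.card α ≤ 2 * s.card := by
  classical
  have hle : sᶜ.card ≤ s.card :=
    Finset.card_le_card_of_injOn f (fun x hx => h x (by simpa using hx)) hf.injOn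
  have := s.card_add_card_compl
  omega

theorem mul_le_two_mul_card_gapSet (p q : ℕ) : (q - 1) * (p - 1) ≤ 2 * (gapSet p q).card := by
  simpa using card_le_two_mul_card_of_notMem_imp_mem (Fin.rev_injective.prodMap Fin.rev_injective)
    fun _ => rev_mem_gapSet_of_notMem (p := p) (q := q)

theorem injective_val_mul_add_val_mul (hco : p.Coprime q) :
    Function.Injective fun m : Fin (q - 1) × Fin (p - 1) => (m.1 : ℕ) * p + m.2 * q := by
  rintro ⟨a, b⟩ ⟨a', b'⟩ h
  have hmod : (a : ℕ) * p ≡ a' * p [MOD q] := by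
    have h' : (a * p + b * q : ℕ) ≡ a' * p + b' * q [MOD q] := congrArg (· % q) h
    simpa [Nat.ModEq] using h'
  have ha : (a : ℕ) = a' := (hmod.cancel_right_of_coprime hco.symm).eq_of_lt_of_lt
    (by omega) (by omega)
  have hb : (b : ℕ) = b' := by
    have hq : q ≠ 0 := by omega
    simpa [ha, hq] using h
  exact Prod.ext (Fin.ext ha) (Fin.ext hb)

variable {K : Type*} [Field K]

theorem degree_dickson_pow_mul_dickson_pow [NeZero p] [NeZero q] (a b : ℕ) :
    (dickson 1 (1 : K) p ^ a * dickson 1 1 q ^ b).degree = ((a * p + b * q : ℕ) : WithBot ℕ) := by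
  rw [Polynomial.degree_mul, Polynomial.degree_pow, Polynomial.degree_pow,
    degree_dickson _ _ (NeZero.ne p), degree_dickson _ _ (NeZero.ne q)]
  simp

theorem linearIndependent_dickson_pow_mul_dickson_pow [NeZero p] [NeZero q] (hco : p.Coprime q) :
    LinearIndependent K fun m : Fin (q - 1) × Fin (p - 1) =>
      dickson 1 (1 : K) p ^ (m.1 : ℕ) * dickson 1 1 q ^ (m.2 : ℕ) := by
  refine linearIndependent_of_injective_degree (fun m => ?_) ?_
  · rw [← Polynomial.degree_ne_bot, degree_dickson_pow_mul_dickson_pow]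
    exact WithBot.coe_ne_bot
  · simp only [degree_dickson_pow_mul_dickson_pow]
    exact Nat.cast_injective.comp (injective_val_mul_add_val_mul hco)

end GapMonomials

section ChebyshevCurve

open Polynomial (dickson)

section PolynomialInOneVariable

variable {R σ : Type*} [CommSemiring R]

theorem eval_polynomial_aeval_X (x : σ → R) (k : σ) (f : Polynomial R) :
    eval x (Polynomial.aeval (X k : MvPolynomial σ R) f) = f.eval (x k) := by
  rw [← aeval_eq_eval, ← Polynomial.aeval_algHom_apply, aeval_X, Polynomial.coe_aeval_eq_eval]

theorem pderiv_polynomial_aeval_X_self (k : σ) (f : Polynomial R) :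
    pderiv k (Polynomial.aeval (X k : MvPolynomial σ R) f) =
      Polynomial.aeval (X k) f.derivative := by
  rw [Derivation.map_aeval, pderiv_X_self, smul_eq_mul, mul_one]

theorem pderiv_polynomial_aeval_X_of_ne {j k : σ} (h : j ≠ k) (f : Polynomial R) :
    pderiv k (Polynomial.aeval (X j : MvPolynomial σ R) f) = 0 := by
  rw [Derivation.map_aeval, pderiv_X_of_ne h, smul_zero]

end PolynomialInOneVariable

variable {K : Type*} [Field K] {p q : ℕ}

variable (K p q) in
/-- The curve `D_p(Y) = D_q(X)`, where `D_n` is the Dickson polynomial with parameter `1`; over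
`ℂ` it is the Chebyshev curve `T_p(Y/2) = T_q(X/2)`. -/
noncomputable def chebyshevCurve : MvPolynomial (Fin 2) K :=
  Polynomial.aeval (X 1) (dickson 1 (1 : K) p) - Polynomial.aeval (X 0) (dickson 1 (1 : K) q)

theorem eval_chebyshevCurve (x : Fin 2 → K) :
    eval x (chebyshevCurve K p q) =
      (dickson 1 (1 : K) p).eval (x 1) - (dickson 1 (1 : K) q).eval (x 0) := by
  rw [chebyshevCurve, map_sub, eval_polynomial_aeval_X, eval_polynomial_aeval_X]

theorem pderiv_zero_chebyshevCurve :
    pderiv 0 (chebyshevCurve K p q) =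
      -Polynomial.aeval (X 0) (dickson 1 (1 : K) q).derivative := by
  rw [chebyshevCurve, map_sub, pderiv_polynomial_aeval_X_self,
    pderiv_polynomial_aeval_X_of_ne (by decide), zero_sub]

theorem pderiv_one_chebyshevCurve :
    pderiv 1 (chebyshevCurve K p q) =
      Polynomial.aeval (X 1) (dickson 1 (1 : K) p).derivative := by
  rw [chebyshevCurve, map_sub, pderiv_polynomial_aeval_X_self,
    pderiv_polynomial_aeval_X_of_ne (by decide), sub_zero]

theorem eval_det_hessian_chebyshevCurve (x : Fin 2 → K) :
    eval x (hessian (chebyshevCurve K p q)).det =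
      -((dickson 1 (1 : K) q).derivative.derivative.eval (x 0) *
        (dickson 1 (1 : K) p).derivative.derivative.eval (x 1)) := by
  rw [Matrix.det_fin_two]
  simp only [hessian, Matrix.of_apply, pderiv_zero_chebyshevCurve, pderiv_one_chebyshevCurve,
    map_neg, pderiv_polynomial_aeval_X_self]
  rw [pderiv_polynomial_aeval_X_of_ne (by decide)]
  simp only [map_sub, map_mul, map_neg, map_zero, eval_polynomial_aeval_X]
  ring

/-- The critical points of `chebyshevCurve K p q`, for a primitive `2pq`-th root of unity `ζ`. -/
def chebyshevPoint (ζ : K) (p q : ℕ) (z : Fin (q - 1) × Fin (p - 1)) : Fin 2 → K :=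
  ![joukowsky ((ζ ^ p) ^ (z.1 + 1 : ℕ)), joukowsky ((ζ ^ q) ^ (z.2 + 1 : ℕ))]

/-- The indices of the critical points which lie on `chebyshevCurve K p q`, that is, of its
nodes. -/
def chebyshevNodeSet (ζ : K) (p q : ℕ) : Set (Fin (q - 1) × Fin (p - 1)) :=
  {z | eval (chebyshevPoint ζ p q z) (chebyshevCurve K p q) = 0}

variable {ζ : K}

theorem mem_chebyshevNodeSet_iff {z : Fin (q - 1) × Fin (p - 1)} :
    z ∈ chebyshevNodeSet ζ p q ↔
      (dickson 1 (1 : K) p).eval (joukowsky ((ζ ^ q) ^ (z.2 + 1 : ℕ))) =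
        (dickson 1 (1 : K) q).eval (joukowsky ((ζ ^ p) ^ (z.1 + 1 : ℕ))) := by
  rw [chebyshevNodeSet, Set.mem_ofPred_eq, eval_chebyshevCurve, sub_eq_zero]
  rfl

variable [NeZero p] [NeZero q]

theorem isPrimitiveRoot_pow_left (hζ : IsPrimitiveRoot ζ (2 * (p * q))) :
    IsPrimitiveRoot (ζ ^ p) (2 * q) :=
  hζ.pow (NeZero.pos _) (mul_left_comm _ _ _)

theorem isPrimitiveRoot_pow_right (hζ : IsPrimitiveRoot ζ (2 * (p * q))) :
    IsPrimitiveRoot (ζ ^ q) (2 * p) :=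
  isPrimitiveRoot_pow_left (by rwa [mul_comm q])

theorem chebyshevPoint_injective (hζ : IsPrimitiveRoot ζ (2 * (p * q))) :
    Function.Injective (chebyshevPoint ζ p q) := by
  intro z z' h
  have h0 := eq_of_joukowsky_pow_eq (isPrimitiveRoot_pow_left hζ) (by omega) (by omega)
    (congrFun h 0)
  have h1 := eq_of_joukowsky_pow_eq (isPrimitiveRoot_pow_right hζ) (by omega) (by omega)
    (congrFun h 1)
  exact Prod.ext (Fin.ext (by omega)) (Fin.ext (by omega))

theorem isNondegenerateCriticalPoint_chebyshevPoint (hζ : IsPrimitiveRoot ζ (2 * (p * q)))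
    (z : Fin (q - 1) × Fin (p - 1)) :
    IsNondegenerateCriticalPoint (chebyshevCurve K p q) (chebyshevPoint ζ p q z) := by
  have hζp := isPrimitiveRoot_pow_left hζ
  have hζq := isPrimitiveRoot_pow_right hζ
  have := hζp.neZero'
  have := hζq.neZero'
  have hx := pow_pow_two_mul_eq_one hζp (z.1 + 1)
  have hy := pow_pow_two_mul_eq_one hζq (z.2 + 1)
  have hx2 := pow_succ_sq_ne_one hζp z.1
  have hy2 := pow_succ_sq_ne_one hζq z.2
  refine ⟨Fin.forall_fin_two.mpr ⟨?_, ?_⟩, ?_⟩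
  · rw [pderiv_zero_chebyshevCurve, map_neg, eval_polynomial_aeval_X, neg_eq_zero]
    exact eval_derivative_dickson_joukowsky hx hx2
  · rw [pderiv_one_chebyshevCurve, eval_polynomial_aeval_X]
    exact eval_derivative_dickson_joukowsky hy hy2
  · rw [eval_det_hessian_chebyshevCurve]
    exact neg_ne_zero.mpr (mul_ne_zero
      (eval_derivative_derivative_dickson_joukowsky_ne_zero hx hx2)
      (eval_derivative_derivative_dickson_joukowsky_ne_zero hy hy2))

theorem exists_mem_chebyshevNodeSet (hζ : IsPrimitiveRoot ζ (2 * (p * q))) {k : ℕ}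
    (hp : ¬ p ∣ k) (hq : ¬ q ∣ k) :
    ∃ z ∈ chebyshevNodeSet ζ p q, chebyshevPoint ζ p q z =
      ![(dickson 1 (1 : K) p).eval (joukowsky (ζ ^ k)),
        (dickson 1 (1 : K) q).eval (joukowsky (ζ ^ k))] := by
  have hk : ζ ^ k ≠ 0 := pow_ne_zero k (hζ.ne_zero (NeZero.ne _))
  have hζp := isPrimitiveRoot_pow_left hζ
  have hζq := isPrimitiveRoot_pow_right hζ
  obtain ⟨i, hi⟩ := exists_joukowsky_pow_succ_eq hζp (pow_pow_two_mul_eq_one hζp k)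
    ((pow_sq_ne_one_iff_not_dvd hζp).mpr hq)
  obtain ⟨j, hj⟩ := exists_joukowsky_pow_succ_eq hζq (pow_pow_two_mul_eq_one hζq k)
    ((pow_sq_ne_one_iff_not_dvd hζq).mpr hp)
  refine ⟨(i, j), ?_, ?_⟩
  · rw [mem_chebyshevNodeSet_iff, hi, hj, pow_right_comm, pow_right_comm ζ p,
      eval_dickson_joukowsky (pow_ne_zero q hk), eval_dickson_joukowsky (pow_ne_zero p hk),
      pow_right_comm]
  · rw [chebyshevPoint, hi, hj, pow_right_comm, pow_right_comm ζ q, eval_dickson_joukowsky hk,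
      eval_dickson_joukowsky hk]

theorem map_id_rev_notMem_chebyshevNodeSet (hζ : IsPrimitiveRoot ζ (2 * (p * q))) (hp : Odd p)
    {z : Fin (q - 1) × Fin (p - 1)} (hz : z ∈ chebyshevNodeSet ζ p q) :
    Prod.map id Fin.rev z ∉ chebyshevNodeSet ζ p q := by
  rw [mem_chebyshevNodeSet_iff] at hz ⊢
  exact fun h => eval_dickson_joukowsky_pow_rev_ne (isPrimitiveRoot_pow_right hζ) hp z.2
    (h.trans hz.symm)

theorem map_rev_id_notMem_chebyshevNodeSet (hζ : IsPrimitiveRoot ζ (2 * (p * q))) (hq : Odd q)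
    {z : Fin (q - 1) × Fin (p - 1)} (hz : z ∈ chebyshevNodeSet ζ p q) :
    Prod.map Fin.rev id z ∉ chebyshevNodeSet ζ p q := by
  rw [mem_chebyshevNodeSet_iff] at hz ⊢
  exact fun h => eval_dickson_joukowsky_pow_rev_ne (isPrimitiveRoot_pow_left hζ) hq z.1
    (h.symm.trans hz)

theorem two_mul_card_chebyshevNodeSet_le [Fintype (chebyshevNodeSet ζ p q)] (hco : p.Coprime q)
    (hζ : IsPrimitiveRoot ζ (2 * (p * q))) :
    2 * Fintype.card (chebyshevNodeSet ζ p q) ≤ (q - 1) * (p - 1) := by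
  classical
  obtain ⟨f, hf, hfn⟩ : ∃ f : Fin (q - 1) × Fin (p - 1) → Fin (q - 1) × Fin (p - 1),
      Function.Injective f ∧ ∀ z ∈ chebyshevNodeSet ζ p q, f z ∉ chebyshevNodeSet ζ p q := by
    rcases Nat.even_or_odd p with hp | hp
    · have hq : Odd q := Nat.not_even_iff_odd.mp fun hq =>
        Nat.not_coprime_of_dvd_of_dvd one_lt_two hp.two_dvd hq.two_dvd hco
      exact ⟨_, Fin.rev_injective.prodMap Function.injective_id,
        fun z => map_rev_id_notMem_chebyshevNodeSet hζ hq⟩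
    · exact ⟨_, Function.injective_id.prodMap Fin.rev_injective,
        fun z => map_id_rev_notMem_chebyshevNodeSet hζ hp⟩
  have hle := card_le_two_mul_card_of_notMem_imp_mem (s := (chebyshevNodeSet ζ p q).toFinsetᶜ) hf
    (by simpa using hfn)
  have hcompl := (chebyshevNodeSet ζ p q).toFinset.card_add_card_compl
  rw [Set.toFinset_card] at hcompl
  rw [Fintype.card_prod, Fintype.card_fin, Fintype.card_fin] at hle hcompl
  omega

/-- The values of the gap monomials at the nodes of the Chebyshev curve. -/
noncomputable def chebyshevNodeMatrix (ζ : K) (p q : ℕ) :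
    Matrix (chebyshevNodeSet ζ p q) (gapSet p q) K :=
  Matrix.of fun z m => eval (chebyshevPoint ζ p q z) (gapMonomial K m)

theorem exists_injective_joukowsky_pow (hco : p.Coprime q) (hζ : IsPrimitiveRoot ζ (2 * (p * q))) :
    ∃ k : Fin (q - 1) × Fin (p - 1) → ℕ, (∀ z, ¬ p ∣ k z ∧ ¬ q ∣ k z) ∧
      Function.Injective fun z => joukowsky (ζ ^ k z) := by
  let k (z : Fin (q - 1) × Fin (p - 1)) : ℕ := Nat.chineseRemainder hco (z.2 + 1) (z.1 + 1)
  have hp0 := NeZero.ne p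
  have hq0 := NeZero.ne q
  have hkp (z) : k z ≡ z.2 + 1 [MOD p] := (Nat.chineseRemainder hco (z.2 + 1) (z.1 + 1)).2.1
  have hkq (z) : k z ≡ z.1 + 1 [MOD q] := (Nat.chineseRemainder hco (z.2 + 1) (z.1 + 1)).2.2
  have hklt (z) : k z < p * q := Nat.chineseRemainder_lt_mul hco _ _ hp0 hq0
  refine ⟨k, fun z => ⟨?_, ?_⟩, fun z z' hzz => ?_⟩
  · rw [(hkp z).dvd_iff dvd_rfl]
    exact Nat.not_dvd_of_pos_of_lt (Nat.succ_pos _) (by omega)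
  · rw [(hkq z).dvd_iff dvd_rfl]
    exact Nat.not_dvd_of_pos_of_lt (Nat.succ_pos _) (by omega)
  · have hk : k z = k z' := eq_of_joukowsky_pow_eq hζ (hklt z) (hklt z') hzz
    have h1 := ((hkq z).symm.trans (hk ▸ hkq z')).eq_of_lt_of_lt (by omega) (by omega)
    have h2 := ((hkp z).symm.trans (hk ▸ hkp z')).eq_of_lt_of_lt (by omega) (by omega)
    exact Prod.ext (Fin.ext (by omega)) (Fin.ext (by omega))

theorem degree_sum_dickson_pow_mul_dickson_pow_lt (c : gapSet p q → K) :
    (∑ m : gapSet p q, c m • (dickson 1 (1 : K) p ^ (m.1.1 : ℕ) *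
      dickson 1 1 q ^ (m.1.2 : ℕ))).degree <
      (((q - 1) * (p - 1) : ℕ) : WithBot ℕ) := by
  rw [← Polynomial.mem_degreeLT]
  refine Submodule.sum_mem _ fun m _ => Submodule.smul_mem _ _ ?_
  rw [Polynomial.mem_degreeLT, degree_dickson_pow_mul_dickson_pow, mul_comm (q - 1)]
  exact Nat.cast_lt.mpr (mem_gapSet.mp m.2)

theorem injective_chebyshevNodeMatrix_mulVec (hco : p.Coprime q)
    (hζ : IsPrimitiveRoot ζ (2 * (p * q))) :
    Function.Injective (chebyshevNodeMatrix ζ p q).mulVec := by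
  refine (injective_iff_map_eq_zero (chebyshevNodeMatrix ζ p q).mulVecLin).mpr fun c hc => ?_
  set g : Polynomial K := ∑ m, c m • (dickson 1 (1 : K) p ^ (m.1.1 : ℕ) *
    dickson 1 1 q ^ (m.1.2 : ℕ))
  obtain ⟨k, hk, hinj⟩ := exists_injective_joukowsky_pow hco hζ
  have hzero (z) : g.eval (joukowsky (ζ ^ k z)) = 0 := by
    obtain ⟨w, hw, hwz⟩ := exists_mem_chebyshevNodeSet hζ (hk z).1 (hk z).2
    have hcw := congrFun hc ⟨w, hw⟩
    simpa [g, Matrix.mulVec, dotProduct, chebyshevNodeMatrix, gapMonomial, hwz,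
      Polynomial.eval_finsetSum, mul_comm] using hcw
  have hg0 : g = 0 := Polynomial.eq_zero_of_degree_lt_of_eval_index_eq_zero Finset.univ
    hinj.injOn (by simpa only [Finset.card_univ, Fintype.card_prod, Fintype.card_fin] using
      degree_sum_dickson_pow_mul_dickson_pow_lt c) fun z _ => hzero z
  have hli := (linearIndependent_dickson_pow_mul_dickson_pow (K := K) hco).comp
    _ (Subtype.val_injective (p := (· ∈ gapSet p q)))
  exact funext (Fintype.linearIndependent_iff.mp hli c hg0)

theorem surjective_chebyshevNodeMatrix_mulVec (hco : p.Coprime q)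
    (hζ : IsPrimitiveRoot ζ (2 * (p * q))) :
    Function.Surjective (chebyshevNodeMatrix ζ p q).mulVec := by
  classical
  have hinj : Function.Injective (chebyshevNodeMatrix ζ p q).mulVecLin :=
    injective_chebyshevNodeMatrix_mulVec hco hζ
  have hle := LinearMap.finrank_le_finrank_of_injective hinj
  refine (LinearMap.injective_iff_surjective_of_finrank_eq_finrank ?_).mp hinj
  have hnodes := two_mul_card_chebyshevNodeSet_le hco hζ
  have hgaps := mul_le_two_mul_card_gapSet p q
  rw [Module.finrank_fintype_fun_eq_card, Module.finrank_fintype_fun_eq_card,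
    Fintype.card_coe] at hle ⊢
  omega

theorem exists_det_submatrix_chebyshevNodeMatrix_ne_zero (hco : p.Coprime q)
    (hζ : IsPrimitiveRoot ζ (2 * (p * q))) {τ : Type*} [Fintype τ] [DecidableEq τ]
    {m : τ → gapSet p q} (hm : Function.Injective m) :
    ∃ e : τ → chebyshevNodeSet ζ p q, Function.Injective e ∧
      ((chebyshevNodeMatrix ζ p q).submatrix e m).det ≠ 0 := by
  classical
  have hcol : LinearIndependent K ((chebyshevNodeMatrix ζ p q).submatrix id m).col :=
    (Matrix.mulVec_injective_iff.mp (injective_chebyshevNodeMatrix_mulVec hco hζ)).comp m hm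
  exact exists_det_submatrix_ne_zero hcol

theorem exists_linearSystem_chebyshevCurve [IsAlgClosed K] (hco : p.Coprime q)
    (hζ : IsPrimitiveRoot ζ (2 * (p * q))) {τ : Type*} [Fintype τ] [DecidableEq τ]
    {e : τ → chebyshevNodeSet ζ p q} {m : τ → gapSet p q}
    (hdet : ((chebyshevNodeMatrix ζ p q).submatrix e m).det ≠ 0) :
    ∃ (t : gapSet p q → K) (Q : Fin (q - 1) × Fin (p - 1) → Fin 2 → K), Function.Injective Q ∧
      (∀ z, IsNondegenerateCriticalPoint
        (linearSystem (chebyshevCurve K p q) (gapMonomial K) t) (Q z)) ∧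
      (∀ z, eval (Q z) (linearSystem (chebyshevCurve K p q) (gapMonomial K) t) = 0 ↔
        ∃ i, (e i).1 = z) ∧
      (Matrix.of fun i k => eval (Q (e i)) (gapMonomial K (m k))).det ≠ 0 := by
  obtain ⟨g, hg, hginj⟩ := exists_eval_uncurry_ne_zero_imp_injective (chebyshevPoint_injective hζ)
  obtain ⟨t, Q, hQ, hQ0, hQg⟩ := exists_linearSystem_eval_eq_zero_iff_mem
    (isNondegenerateCriticalPoint_chebyshevPoint hζ)
    (surjective_chebyshevNodeMatrix_mulVec hco hζ) (T := Set.range fun i => (e i).1)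
    (by rintro _ ⟨i, rfl⟩; exact (e i).2)
    (g := g * (Matrix.of fun i k => rename (Prod.mk (e i).1) (gapMonomial K (m k))).det)
    (by rw [map_mul, eval_uncurry_det_rename]; exact mul_ne_zero hg hdet)
  rw [map_mul, eval_uncurry_det_rename, mul_ne_zero_iff] at hQg
  exact ⟨t, Q, hginj Q hQg.1, hQ, hQ0, hQg.2⟩

end ChebyshevCurve

section NodalCurve

variable {K : Type} [Field K] {p q : ℕ}

theorem hessPoly_eq_det_hessian (G : MvPolynomial (Fin 2) K) :
    hessPoly K G = (hessian G).det := by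
  rw [Matrix.det_fin_two, hessPoly, sq]
  simp only [hessian, Matrix.of_apply, pderiv_comm (1 : Fin 2) 0]

theorem isSingAt_iff {G : MvPolynomial (Fin 2) K} {x : Fin 2 → K} :
    IsSingAt K G (x 0, x 1) ↔ eval x G = 0 ∧ ∀ k, eval x (pderiv k G) = 0 := by
  have hη : ![x 0, x 1] = x := FinVec.etaExpand_eq x
  rw [IsSingAt, hη, Fin.forall_fin_two]

theorem IsNondegenerateCriticalPoint.isNodeAt {G : MvPolynomial (Fin 2) K} {x : Fin 2 → K}
    (hx : IsNondegenerateCriticalPoint G x) (h0 : eval x G = 0) : IsNodeAt K G (x 0, x 1) := by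
  have hη : ![x 0, x 1] = x := FinVec.etaExpand_eq x
  rw [IsNodeAt, hessPoly_eq_det_hessian, hη]
  exact ⟨isSingAt_iff.mpr ⟨h0, hx.eval_pderiv⟩, hx.eval_det_hessian⟩

theorem X_pow_mul_X_pow_mem_span_idxSet {a b : ℕ} (h : a * p + b * q < p * q) :
    (X 0 ^ a * X 1 ^ b : MvPolynomial (Fin 2) K) ∈ Submodule.span K
      (Set.range fun i : idxSet p q => (X 0 ^ i.1.1 * X 1 ^ i.1.2 : MvPolynomial (Fin 2) K)) := by
  have ha : a < q := lt_of_mul_lt_mul_left (a := p) (by rw [mul_comm p a]; omega) (Nat.zero_le p)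
  have hb : b < p := lt_of_mul_lt_mul_right (a := q) (by omega) (Nat.zero_le q)
  refine Submodule.subset_span ⟨⟨(a, b), ?_⟩, rfl⟩
  simpa [idxSet] using ⟨⟨ha, hb⟩, h⟩

theorem polynomial_aeval_mem_of_forall_pow_mem {R A : Type*} [CommRing R] [CommRing A] [Algebra R A]
    {S : Submodule R A} {x : A} {n : ℕ} (hS : ∀ i < n, x ^ i ∈ S) {f : Polynomial R}
    (hf : f.degree < (n : WithBot ℕ)) : Polynomial.aeval x f ∈ S := by
  by_cases hf0 : f = 0
  · rw [hf0, map_zero]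
    exact S.zero_mem
  · rw [Polynomial.aeval_eq_sum_range' ((Polynomial.natDegree_lt_iff_degree_lt hf0).mpr hf)]
    exact S.sum_mem fun i hi => S.smul_mem _ (hS i (Finset.mem_range.mp hi))

theorem exists_wPoly_eq_linearSystem_chebyshevCurve [NeZero p] [NeZero q] (t : gapSet p q → K) :
    ∃ a, wPoly K p q a = linearSystem (chebyshevCurve K p q) (gapMonomial K) t := by
  set S := Submodule.span K
    (Set.range fun i : idxSet p q => (X 0 ^ i.1.1 * X 1 ^ i.1.2 : MvPolynomial (Fin 2) K))
  have hY : Polynomial.aeval (X 1) (Polynomial.dickson 1 (1 : K) p - Polynomial.X ^ p) ∈ S := by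
    refine polynomial_aeval_mem_of_forall_pow_mem (fun i hi => ?_)
      (degree_dickson_sub_X_pow_lt 1 1 (NeZero.ne p))
    have h : 0 * p + i * q < p * q := by
      rw [zero_mul, zero_add]
      exact Nat.mul_lt_mul_of_pos_right hi (NeZero.pos q)
    simpa using X_pow_mul_X_pow_mem_span_idxSet (K := K) h
  have hX : Polynomial.aeval (X 0) (Polynomial.dickson 1 (1 : K) q - Polynomial.X ^ q) ∈ S := by
    refine polynomial_aeval_mem_of_forall_pow_mem (fun i hi => ?_)
      (degree_dickson_sub_X_pow_lt 1 1 (NeZero.ne q))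
    have h : i * p + 0 * q < p * q := by
      rw [zero_mul, add_zero, mul_comm]
      exact Nat.mul_lt_mul_of_pos_left hi (NeZero.pos p)
    simpa using X_pow_mul_X_pow_mem_span_idxSet (K := K) h
  have hgap : ∑ m, C (t m) * gapMonomial K m ∈ S := by
    refine S.sum_mem fun m _ => ?_
    rw [← smul_eq_C_mul]
    refine S.smul_mem _ (X_pow_mul_X_pow_mem_span_idxSet ((mem_gapSet.mp m.2).trans_le ?_))
    exact Nat.mul_le_mul (Nat.sub_le p 1) (Nat.sub_le q 1)
  obtain ⟨a, ha⟩ := (Submodule.mem_span_range_iff_exists_fun K).mp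
    (S.add_mem (S.sub_mem hY hX) hgap)
  refine ⟨a, ?_⟩
  simp only [map_sub, map_pow, Polynomial.aeval_X, smul_eq_C_mul] at ha
  simp only [wPoly, mul_assoc, ha, chebyshevCurve, linearSystem]
  ring

theorem isSingAt_wPoly_iff (hp : (p : K) ≠ 0) (hq : (q : K) ≠ 0) {a : idxSet p q → K}
    {x : Fin (q - 1) × Fin (p - 1) → Fin 2 → K} (hx : Function.Injective x)
    (hcrit : ∀ z, IsNondegenerateCriticalPoint (wPoly K p q a) (x z)) {R : K × K} :
    IsSingAt K (wPoly K p q a) R ↔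
      ∃ z, eval (x z) (wPoly K p q a) = 0 ∧ R = (x z 0, x z 1) := by
  refine ⟨fun hR => ?_, ?_⟩
  · obtain ⟨h0, hR⟩ := isSingAt_iff (x := ![R.1, R.2]).mp hR
    obtain ⟨z, hz⟩ := exists_eq_of_eval_pderiv_wPoly_eq_zero hp hq hx
      (fun z => (hcrit z).eval_pderiv) hR
    exact ⟨z, hz ▸ h0, by rw [hz]; rfl⟩
  · rintro ⟨z, h0, rfl⟩
    exact isSingAt_iff.mpr ⟨h0, (hcrit z).eval_pderiv⟩

theorem nodal_curve_with_nonvanishing_node_determinant_exists_general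
    (K : Type) [Field K] [IsAlgClosed K] (p q : ℕ) (hpq : ((2 * (p * q) : ℕ) : K) ≠ 0)
    (hco : Nat.Coprime p q) (l : ℕ) (gp : Fin l → ℕ × ℕ) (hinj : Function.Injective gp)
    (hgp : ∀ k, (gp k).1 * p + (gp k).2 * q < (p - 1) * (q - 1)) :
    ∃ (a : idxSet p q → K) (P : Fin l → K × K),
      Function.Injective P ∧
      (∀ Q : K × K, IsSingAt K (wPoly K p q a) Q ↔ ∃ i, Q = P i) ∧
      (∀ i, IsNodeAt K (wPoly K p q a) (P i)) ∧
      (Matrix.of fun i k : Fin l => (P i).1 ^ (gp k).1 * (P i).2 ^ (gp k).2).det ≠ 0 := by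
  have hne : NeZero ((2 * (p * q) : ℕ) : K) := ⟨hpq⟩
  rw [Nat.cast_mul, Nat.cast_mul, mul_ne_zero_iff, mul_ne_zero_iff] at hpq
  obtain ⟨-, hp, hq⟩ := hpq
  have : NeZero p := ⟨ne_zero_of_map (f := Nat.castRingHom K) hp⟩
  have : NeZero q := ⟨ne_zero_of_map (f := Nat.castRingHom K) hq⟩
  obtain ⟨ζ, hζ⟩ := HasEnoughRootsOfUnity.exists_primitiveRoot K (2 * (p * q))
  choose m hm hm1 hm2 using fun k => exists_mem_gapSet (hgp k)
  have hminj : Function.Injective fun k => (⟨m k, hm k⟩ : gapSet p q) := by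
    intro k k' h
    have hk : m k = m k' := congrArg Subtype.val h
    exact hinj (Prod.ext (by rw [← hm1, ← hm1, hk]) (by rw [← hm2, ← hm2, hk]))
  obtain ⟨e, he, hdet⟩ := exists_det_submatrix_chebyshevNodeMatrix_ne_zero hco hζ hminj
  obtain ⟨t, Q, hQinj, hQ, hQ0, hQdet⟩ := exists_linearSystem_chebyshevCurve hco hζ hdet
  obtain ⟨a, ha⟩ := exists_wPoly_eq_linearSystem_chebyshevCurve t
  rw [← ha] at hQ hQ0
  refine ⟨a, fun i => (Q (e i) 0, Q (e i) 1), fun i i' h => ?_, fun R => ?_, fun i => ?_, ?_⟩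
  · refine he (Subtype.ext (hQinj (funext ?_)))
    exact Fin.forall_fin_two.mpr (Prod.ext_iff.mp h)
  · rw [isSingAt_wPoly_iff hp hq hQinj hQ]
    simp [hQ0]
  · exact (hQ _).isNodeAt ((hQ0 _).mpr ⟨i, rfl⟩)
  · simpa [gapMonomial, hm1, hm2] using hQdet

end NodalCurve

/-- Given `l ≥ 1` pairwise distinct pairs `(a_k, b_k) ∈ ℕ²` with `a_k p + b_k q < (p−1)(q−1)`,
there is a nodal curve of type `p,q` with exactly `l` nodes `(ξ_1,η_1), …, (ξ_l,η_l)` such that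
`det((ξ_i^{a_k} η_i^{b_k})_{i,k}) ≠ 0`. -/
theorem nodal_curve_with_nonvanishing_node_determinant_exists
    (K : Type) [Field K] [IsAlgClosed K] [CharZero K]
    (p q : ℕ) (hp : 1 < p) (hpq : p < q) (hco : Nat.Coprime p q)
    (l : ℕ) (hl : 1 ≤ l) (gp : Fin l → ℕ × ℕ) (hinj : Function.Injective gp)
    (hgp : ∀ k, (gp k).1 * p + (gp k).2 * q < (p - 1) * (q - 1)) :
    ∃ (a : idxSet p q → K) (P : Fin l → K × K),
      Function.Injective P ∧
      (∀ Q : K × K, IsSingAt K (wPoly K p q a) Q ↔ ∃ i, Q = P i) ∧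
      (∀ i, IsNodeAt K (wPoly K p q a) (P i)) ∧
      (Matrix.of fun i k : Fin l => (P i).1 ^ (gp k).1 * (P i).2 ^ (gp k).2).det ≠ 0 := by
  have hq : 1 < q := hp.trans hpq
  exact nodal_curve_with_nonvanishing_node_determinant_exists_general K p q
    (Nat.cast_ne_zero.mpr (by positivity)) hco l gp hinj hgp
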